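/- arXiv:1112.6160 — 10 statements merged into one kernel-verified Lean document; each statement's English description precedes it below -/
import Mathlib

section
/- Let E be a finite-dimensional real inner product space with dim E ≥ 2, let w and w' be unit vectors in E, and let α, β' ∈ [0, π/2]. Then {v ∈ E : ‖v‖ = 1 ∧ angle(v, w') ≤ β'} ⊆ {v ∈ E : ‖v‖ = 1 ∧ angle(v, w) ≤ α} if and only if angle(w, w') ≤ α − β'. -/
open Real InnerProductGeometry

/-!
If the cap about `w'` lies inside the cap about `w`, walk from `w'` along a great-circle arc to the
antipode `-w`, that is, directly away from `w`. A point at distance `t` from `w'` on this arc has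
angle `angle w w' + t` to `w`. Stopping at `t = min β' (π - angle w w')` keeps the point in the cap
about `w'`; since `α < π` the cap about `w` omits `-w`, so the walk stops at `t = β'` and
`angle w w' + β' ≤ α`. Points on arcs are found by the intermediate value theorem. The converse is
the triangle inequality for angles.
-/

section Arcs

variable {E : Type*} [NormedAddCommGroup E] [InnerProductSpace ℝ E] {x y z : E} {t : ℝ}

theorem continuousOn_angle_right (hx : x ≠ 0) : ContinuousOn (angle x) {0}ᶜ := fun _ hy =>
  ((continuousAt_angle (x := (x, _)) hx hy).comp
    (Continuous.prodMk_right x).continuousAt).continuousWithinAt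

theorem angle_eq_pi_of_zero_mem_segment (hx : x ≠ 0) (hy : y ≠ 0) (h : (0 : E) ∈ segment ℝ x y) :
    angle x y = π := by
  have hsbtw : Sbtw ℝ x 0 y := ⟨mem_segment_iff_wbtw.1 h, hx.symm, hy.symm⟩
  simpa [EuclideanGeometry.angle] using EuclideanGeometry.angle_eq_pi_iff_sbtw.2 hsbtw

theorem angle_eq_add_of_mem_segment (hz : z ≠ 0) (h : z ∈ segment ℝ x y) :
    angle x y = angle x z + angle z y := by
  obtain ⟨a, b, ha, hb, -, rfl⟩ := h
  exact angle_eq_angle_add_add_angle_add_of_mem_span hz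
    (Submodule.mem_span_pair.2 ⟨⟨a, ha⟩, ⟨b, hb⟩, rfl⟩)

theorem exists_mem_segment_angle_eq (hx : x ≠ 0) (hy : y ≠ 0) (hxy : angle x y ≠ π)
    (ht : t ∈ Set.Icc 0 (angle x y)) : ∃ z ∈ segment ℝ x y, z ≠ 0 ∧ angle x z = t := by
  have hsub : segment ℝ x y ⊆ {0}ᶜ := fun z hz hz0 =>
    hxy (angle_eq_pi_of_zero_mem_segment hx hy (hz0 ▸ hz))
  rw [← angle_self hx] at ht
  obtain ⟨z, hz, hzt⟩ := (convex_segment x y).isPreconnected.intermediate_value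
    (left_mem_segment ℝ x y) (right_mem_segment ℝ x y) ((continuousOn_angle_right hx).mono hsub) ht
  exact ⟨z, hz, hsub hz, hzt⟩

theorem exists_ne_zero_angle_eq (hrank : 1 < Module.rank ℝ E) (hx : x ≠ 0)
    (ht : t ∈ Set.Icc 0 π) : ∃ z : E, z ≠ 0 ∧ angle x z = t := by
  have hsub : Metric.sphere (0 : E) ‖x‖ ⊆ {0}ᶜ := fun z hz =>
    ne_zero_of_mem_sphere (norm_ne_zero_iff.2 hx) ⟨z, hz⟩
  rw [← angle_self hx, ← angle_self_neg_of_nonzero hx] at ht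
  obtain ⟨z, hz, hzt⟩ := (isPreconnected_sphere hrank 0 ‖x‖).intermediate_value
    (a := x) (b := -x) (by simp) (by simp) ((continuousOn_angle_right hx).mono hsub) ht
  exact ⟨z, hsub hz, hzt⟩

theorem exists_norm_eq_one_angle_eq_and_angle_eq_sub (hrank : 1 < Module.rank ℝ E)
    (hx : x ≠ 0) (hy : y ≠ 0) (ht : t ∈ Set.Icc 0 (angle x y)) :
    ∃ z : E, ‖z‖ = 1 ∧ angle x z = t ∧ angle z y = angle x y - t := by
  suffices ∃ z : E, z ≠ 0 ∧ angle x z = t ∧ angle x y = angle x z + angle z y by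
    obtain ⟨z, hz, hxz, hadd⟩ := this
    refine ⟨NormedSpace.normalize z, NormedSpace.norm_normalize hz, ?_, ?_⟩
    · rwa [angle_normalize_right]
    · rw [angle_normalize_left, hadd, hxz, add_sub_cancel_left]
  by_cases hxy : angle x y = π
  · obtain ⟨z, hz, hxz⟩ := exists_ne_zero_angle_eq hrank hx (hxy ▸ ht)
    exact ⟨z, hz, hxz, (angle_eq_angle_add_angle_iff hz).2 (Or.inl hxy)⟩
  · obtain ⟨z, hseg, hz, hxz⟩ := exists_mem_segment_angle_eq hx hy hxy ht
    exact ⟨z, hz, hxz, angle_eq_add_of_mem_segment hz hseg⟩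

end Arcs

theorem stmt1_general {E : Type*} [NormedAddCommGroup E] [InnerProductSpace ℝ E]
    (hrank : 1 < Module.rank ℝ E) {w w' : E} (hw : w ≠ 0) (hw' : w' ≠ 0)
    {α β' : ℝ} (hα : α < π) (hβ' : 0 ≤ β') :
    {v : E | ‖v‖ = 1 ∧ angle v w' ≤ β'} ⊆ {v : E | ‖v‖ = 1 ∧ angle v w ≤ α} ↔
      angle w w' ≤ α - β' := by
  constructor
  · intro hsub
    have hanti : angle w' (-w) = π - angle w w' := by rw [angle_neg_right, angle_comm]
    have ht : min β' (π - angle w w') ∈ Set.Icc 0 (angle w' (-w)) :=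
      ⟨le_min hβ' (sub_nonneg.2 (angle_le_pi w w')), hanti ▸ min_le_right _ _⟩
    obtain ⟨v, hv, hw'v, hvw⟩ :=
      exists_norm_eq_one_angle_eq_and_angle_eq_sub hrank hw' (neg_ne_zero.2 hw) ht
    have hle : angle v w ≤ α :=
      (hsub ⟨hv, by rw [angle_comm, hw'v]; exact min_le_left _ _⟩).2
    rw [angle_neg_right, hanti] at hvw
    rcases min_choice β' (π - angle w w') with hmin | hmin <;> rw [hmin] at hvw <;> linarith
  · rintro hle v ⟨hv, hvw'⟩
    have htri : angle v w ≤ angle v w' + angle w w' :=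
      angle_comm w w' ▸ angle_le_angle_add_angle v w' w
    exact ⟨hv, by linarith⟩

/-- The closed spherical cap `C(w', β')` is contained in the cap `C(w, α)` if and only if
`angle(w, w') ≤ α − β'`. -/
theorem stmt1 {E : Type*} [NormedAddCommGroup E] [InnerProductSpace ℝ E]
    [FiniteDimensional ℝ E] (hdim : 2 ≤ Module.finrank ℝ E)
    (w w' : E) (hw : ‖w‖ = 1) (hw' : ‖w'‖ = 1)
    (α β' : ℝ) (hα : α ∈ Set.Icc 0 (π / 2)) (hβ' : β' ∈ Set.Icc 0 (π / 2)) :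
    {v : E | ‖v‖ = 1 ∧ InnerProductGeometry.angle v w' ≤ β'} ⊆
      {v : E | ‖v‖ = 1 ∧ InnerProductGeometry.angle v w ≤ α} ↔
    InnerProductGeometry.angle w w' ≤ α - β' :=
  stmt1_general (Module.lt_rank_of_lt_finrank (by exact_mod_cast hdim))
    (ne_zero_of_norm_ne_zero (by simp [hw])) (ne_zero_of_norm_ne_zero (by simp [hw']))
    (hα.2.trans_lt (half_lt_self pi_pos)) hβ'.1
end

section
/- Let E be a finite-dimensional real inner product space with dim E ≥ 2, let U ⊆ E, and let (w, β) be a cone field over U with 0 < β_x < π/2 for every x ∈ U. Then (w, β) is upper semicontinuous over U if and only if its complementary cone field (w, π/2 − β) (i.e., x ↦ (w_x, π/2 − β_x)) is lower semicontinuous over U. -/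
open Real InnerProductGeometry

/-!
The unit vectors of the cone `(w, π/2 - β)` are exactly those making an angle at most `π/2` with
every unit vector of `(w, β)`: one inclusion is the triangle inequality for angles, and for the
other one rotates `w` by `β` away from a vector `v` outside `(w, π/2 - β)`, inside the plane of
`v` and `w`, which gives a unit vector of `(w, β)` at an obtuse angle to `v`. Passing to
complementary cones is therefore an order-reversing involution, and it exchanges the inclusions
defining upper and lower semicontinuity.
-/

section UnitCone

variable {E : Type*} [NormedAddCommGroup E] [InnerProductSpace ℝ E] {v w w' : E} {β β' : ℝ}

/-- The set of unit vectors of the cone with axis `w` and half-angle `β`. -/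
def unitCone (w : E) (β : ℝ) : Set E :=
  {v | ‖v‖ = 1 ∧ angle v w ≤ β}

lemma unitCone_subset_unitCone_iff :
    unitCone w β ⊆ unitCone w' β' ↔ ∀ v, ‖v‖ = 1 → angle v w ≤ β → angle v w' ≤ β' :=
  ⟨fun h _ hv hvw => (h ⟨hv, hvw⟩).2, fun h v hv => ⟨hv.1, h v hv.1 hv.2⟩⟩

lemma unitCone_mono (h : β ≤ β') : unitCone w β ⊆ unitCone w β' :=
  fun _ hv => ⟨hv.1, hv.2.trans h⟩

lemma exists_orthogonal_eq_cos_smul_add_sin_smul (hv : ‖v‖ = 1) (hw : ‖w‖ = 1)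
    (hsin : sin (angle v w) ≠ 0) :
    ∃ e : E, ‖e‖ = 1 ∧ inner ℝ w e = 0 ∧ v = cos (angle v w) • w + sin (angle v w) • e := by
  set θ := angle v w
  have inner_vw : inner ℝ v w = cos θ := inner_eq_cos_angle_of_norm_eq_one hv hw
  have norm_sub : ‖v - cos θ • w‖ = sin θ := by
    rw [← sq_eq_sq₀ (norm_nonneg _) (sin_angle_nonneg v w), norm_sub_sq_real,
      real_inner_smul_right, inner_vw, norm_smul, hv, hw, Real.norm_eq_abs, mul_one, sq_abs,
      sin_sq]
    ring
  have inner_sub : inner ℝ w (v - cos θ • w) = 0 := by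
    rw [inner_sub_right, real_inner_smul_right, real_inner_comm, inner_vw,
      real_inner_self_eq_norm_sq, hw]
    ring
  refine ⟨(sin θ)⁻¹ • (v - cos θ • w), ?_, ?_, ?_⟩
  · rw [norm_smul, norm_sub, norm_inv, Real.norm_of_nonneg (sin_angle_nonneg v w),
      inv_mul_cancel₀ hsin]
  · rw [real_inner_smul_right, inner_sub, mul_zero]
  · rw [smul_inv_smul₀ hsin, add_sub_cancel]

lemma norm_cos_smul_sub_sin_smul {e : E} (hw : ‖w‖ = 1) (he : ‖e‖ = 1) (hwe : inner ℝ w e = 0)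
    (t : ℝ) : ‖cos t • w - sin t • e‖ = 1 := by
  rw [← sq_eq_sq₀ (norm_nonneg _) zero_le_one, norm_sub_sq_real, real_inner_smul_left,
    real_inner_smul_right, hwe, norm_smul, norm_smul, hw, he, Real.norm_eq_abs, Real.norm_eq_abs,
    mul_one, mul_one, sq_abs, sq_abs]
  linarith [sin_sq_add_cos_sq t]

lemma exists_norm_eq_one_inner_eq_cos_and_inner_eq_cos_add (hv : ‖v‖ = 1) (hw : ‖w‖ = 1)
    (hsin : sin (angle v w) ≠ 0) (t : ℝ) :
    ∃ u : E, ‖u‖ = 1 ∧ inner ℝ u w = cos t ∧ inner ℝ u v = cos (angle v w + t) := by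
  obtain ⟨e, he, hwe, v_eq⟩ := exists_orthogonal_eq_cos_smul_add_sin_smul hv hw hsin
  have inner_uw : inner ℝ (cos t • w - sin t • e) w = cos t := by
    rw [inner_sub_left, real_inner_smul_left, real_inner_smul_left, real_inner_comm w e, hwe,
      real_inner_self_eq_norm_sq, hw]
    ring
  have inner_ue : inner ℝ (cos t • w - sin t • e) e = -sin t := by
    rw [inner_sub_left, real_inner_smul_left, real_inner_smul_left, hwe,
      real_inner_self_eq_norm_sq, he]
    ring
  refine ⟨cos t • w - sin t • e, norm_cos_smul_sub_sin_smul hw he hwe t, inner_uw, ?_⟩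
  calc inner ℝ (cos t • w - sin t • e) v
      = inner ℝ (cos t • w - sin t • e) (cos (angle v w) • w + sin (angle v w) • e) := by
        rw [← v_eq]
    _ = cos (angle v w + t) := by
        rw [inner_add_right, real_inner_smul_right, real_inner_smul_right, inner_uw, inner_ue,
          cos_add]
        ring

lemma exists_mem_unitCone_inner_neg (hv : ‖v‖ = 1) (hw : ‖w‖ = 1) (hβ : β ∈ Set.Icc 0 (π / 2))
    (hvw : π / 2 - β < angle v w) : ∃ u ∈ unitCone w β, inner ℝ u v < 0 := by
  have angle_pos : 0 < angle v w := by linarith [hβ.2]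
  rcases (angle_le_pi v w).eq_or_lt with angle_eq_pi | angle_lt_pi
  · have w_ne_zero : w ≠ 0 := norm_ne_zero_iff.mp (hw ▸ one_ne_zero)
    refine ⟨w, ⟨hw, (angle_self w_ne_zero).trans_le hβ.1⟩, ?_⟩
    rw [real_inner_comm, inner_eq_cos_angle_of_norm_eq_one hv hw, angle_eq_pi, cos_pi]
    exact neg_one_lt_zero
  · obtain ⟨u, hu, inner_uw, inner_uv⟩ := exists_norm_eq_one_inner_eq_cos_and_inner_eq_cos_add
      hv hw (sin_pos_of_pos_of_lt_pi angle_pos angle_lt_pi).ne' β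
    have angle_uw : angle u w = β := by
      rw [angle, hu, hw, inner_uw, mul_one, div_one,
        arccos_cos hβ.1 (by linarith [hβ.2, pi_pos])]
    refine ⟨u, ⟨hu, angle_uw.le⟩, ?_⟩
    rw [inner_uv]
    exact cos_neg_of_pi_div_two_lt_of_lt (by linarith) (by linarith [hβ.2])

lemma inner_nonneg_of_mem_unitCone {u : E} (hu : u ∈ unitCone w β)
    (hv : v ∈ unitCone w (π / 2 - β)) : 0 ≤ inner ℝ u v := by
  have angle_uv : angle u v ≤ π / 2 := calc
    angle u v ≤ angle u w + angle w v := angle_le_angle_add_angle u w v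
    _ ≤ β + (π / 2 - β) := add_le_add hu.2 (angle_comm w v ▸ hv.2)
    _ = π / 2 := add_sub_cancel _ _
  rw [inner_eq_cos_angle_of_norm_eq_one hu.1 hv.1]
  exact cos_nonneg_of_neg_pi_div_two_le_of_le (by linarith [angle_nonneg u v, pi_pos]) angle_uv

lemma mem_unitCone_pi_div_two_sub_of_forall_inner_nonneg (hv : ‖v‖ = 1) (hw : ‖w‖ = 1)
    (hβ : β ∈ Set.Icc 0 (π / 2)) (hdual : ∀ u ∈ unitCone w β, 0 ≤ inner ℝ u v) :
    v ∈ unitCone w (π / 2 - β) := by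
  refine ⟨hv, not_lt.mp fun hvw => ?_⟩
  obtain ⟨u, hu, inner_neg⟩ := exists_mem_unitCone_inner_neg hv hw hβ hvw
  exact (hdual u hu).not_gt inner_neg

lemma unitCone_pi_div_two_sub_subset (hw : ‖w‖ = 1) (hβ : β ∈ Set.Icc 0 (π / 2))
    (h : unitCone w β ⊆ unitCone w' β') :
    unitCone w' (π / 2 - β') ⊆ unitCone w (π / 2 - β) := fun _ hv =>
  mem_unitCone_pi_div_two_sub_of_forall_inner_nonneg hv.1 hw hβ fun _ hu =>
    inner_nonneg_of_mem_unitCone (h hu) hv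

lemma unitCone_pi_div_two_sub_subset_iff (hw : ‖w‖ = 1) (hw' : ‖w'‖ = 1)
    (hβ : β ∈ Set.Icc 0 (π / 2)) (hβ' : β' ∈ Set.Icc 0 (π / 2)) :
    unitCone w' (π / 2 - β') ⊆ unitCone w (π / 2 - β) ↔ unitCone w β ⊆ unitCone w' β' := by
  have sub_mem : π / 2 - β' ∈ Set.Icc 0 (π / 2) :=
    ⟨sub_nonneg.mpr hβ'.2, sub_le_self _ hβ'.1⟩
  refine ⟨fun h => ?_, unitCone_pi_div_two_sub_subset hw hβ⟩
  simpa only [sub_sub_cancel] using unitCone_pi_div_two_sub_subset hw' sub_mem h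

end UnitCone

section ConeField

variable {X E : Type*} [PseudoMetricSpace X] [NormedAddCommGroup E] [InnerProductSpace ℝ E]
  {U : Set X} {w : X → E} {β : X → ℝ}

/-- Upper semicontinuity over `U` of the cone field with axes `w x` and half-angles `β x`: cones
over nearby points lie in arbitrarily small enlargements of the cone over `x`. -/
def UpperSemicontinuousConeOn (U : Set X) (w : X → E) (β : X → ℝ) : Prop :=
  ∀ x ∈ U, ∀ ε > 0, ∃ η > 0, ∀ y ∈ U, dist x y < η →
    unitCone (w y) (β y) ⊆ unitCone (w x) (β x + ε)

/-- Lower semicontinuity over `U` of the cone field with axes `w x` and half-angles `β x`: cones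
over nearby points contain arbitrarily small shrinkings of the cone over `x`. The restriction
`ε < β x` keeps the shrunken cone nondegenerate. -/
def LowerSemicontinuousConeOn (U : Set X) (w : X → E) (β : X → ℝ) : Prop :=
  ∀ x ∈ U, ∀ ε > 0, ε < β x → ∃ η > 0, ∀ y ∈ U, dist x y < η →
    unitCone (w x) (β x - ε) ⊆ unitCone (w y) (β y)

lemma upperSemicontinuousConeOn_iff_forall_lt {r : X → ℝ} (hr : ∀ x ∈ U, 0 < r x) :
    UpperSemicontinuousConeOn U w β ↔
      ∀ x ∈ U, ∀ ε > 0, ε < r x → ∃ η > 0, ∀ y ∈ U, dist x y < η →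
        unitCone (w y) (β y) ⊆ unitCone (w x) (β x + ε) := by
  refine ⟨fun h x hx ε hε _ => h x hx ε hε, fun h x hx ε hε => ?_⟩
  obtain ⟨δ, hδ, hδ_lt⟩ := exists_between (lt_min hε (hr x hx))
  obtain ⟨η, hη, hsub⟩ := h x hx δ hδ (hδ_lt.trans_le (min_le_right _ _))
  have hδε : δ ≤ ε := hδ_lt.le.trans (min_le_left _ _)
  exact ⟨η, hη, fun y hy hxy =>
    (hsub y hy hxy).trans (unitCone_mono (add_le_add_right hδε _))⟩

theorem stmt2_general (hw : ∀ x ∈ U, ‖w x‖ = 1) (hβ : ∀ x ∈ U, β x ∈ Set.Ico 0 (π / 2)) :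
    UpperSemicontinuousConeOn U w β ↔ LowerSemicontinuousConeOn U w (fun x => π / 2 - β x) := by
  rw [upperSemicontinuousConeOn_iff_forall_lt fun x hx => sub_pos.mpr (hβ x hx).2]
  refine forall₂_congr fun x hx => forall₃_congr fun ε hε hε_lt => exists_congr fun η =>
    and_congr_right fun _ => forall₃_congr fun y hy _ => ?_
  have add_mem : β x + ε ∈ Set.Icc 0 (π / 2) :=
    ⟨add_nonneg (hβ x hx).1 (le_of_lt hε), (lt_sub_iff_add_lt'.mp hε_lt).le⟩
  rw [sub_sub, unitCone_pi_div_two_sub_subset_iff (hw y hy) (hw x hx)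
    (Set.Ico_subset_Icc_self (hβ y hy)) add_mem]

end ConeField

/-- A cone field `(w, β)` over `U` (with all cones acute and nondegenerate) is upper
semicontinuous if and only if its complementary cone field `(w, π/2 − β)` is lower
semicontinuous. -/
theorem stmt2 {E : Type*} [NormedAddCommGroup E] [InnerProductSpace ℝ E]
    [FiniteDimensional ℝ E] (hdim : 2 ≤ Module.finrank ℝ E)
    (U : Set E) (w : E → E) (β : E → ℝ)
    (hw : ∀ x ∈ U, ‖w x‖ = 1) (hβ : ∀ x ∈ U, 0 < β x ∧ β x < π / 2) :
    (∀ x ∈ U, ∀ ε > 0, ∃ η > 0, ∀ y ∈ U, dist x y < η →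
        ∀ v : E, ‖v‖ = 1 → InnerProductGeometry.angle v (w y) ≤ β y →
          InnerProductGeometry.angle v (w x) ≤ β x + ε) ↔
    (∀ x ∈ U, ∀ ε : ℝ, 0 < ε → ε < π / 2 - β x → ∃ η > 0, ∀ y ∈ U, dist x y < η →
        ∀ v : E, ‖v‖ = 1 → InnerProductGeometry.angle v (w x) ≤ (π / 2 - β x) - ε →
          InnerProductGeometry.angle v (w y) ≤ π / 2 - β y) := by
  simpa only [UpperSemicontinuousConeOn, LowerSemicontinuousConeOn, unitCone_subset_unitCone_iff]
    using stmt2_general hw fun x hx => Set.Ioo_subset_Ico_self (hβ x hx)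
end

section
/- Let E be a finite-dimensional real inner product space, let 0 < δ < r/2, and let K, L ⊆ E be nonempty compact sets with hausdorffDist K L ≤ δ. Suppose that for every x in the annulus K_[r−δ, r+δ] there are a unit vector w_x and an angle β_x ∈ [0, π/2) such that (w_x, β_x) is an r-spanning cone for K_δ from x. Let X : E → E be C^∞ (ContDiff ℝ ⊤ X) with ‖X x‖ = 1 and angle(X x, w_x) < π/2 − β_x for all x ∈ K_[r−δ, r+δ]. Then there exists a deformation retraction of L_r onto K_{r−δ}. -/
open Real InnerProductGeometry Metric

/-!
Finitely many straight steps along `X` replace its flow. On the part `A` of `L_r` where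
`d_K ≥ r - δ`, the vector `X x` makes an acute angle with `p - x` for every point `p` of `K` or `L`
closest to `x`: for `L` because `p` itself lies in `K_δ ∩ closedBall x r`, for `K` because the
point of the segment `[x, p]` at distance `δ` from `p` does. As `A` is compact, there are `c, s > 0`
such that a step from `x ∈ A` to `x + t • X x` with `0 ≤ t ≤ s` lowers `d_K` by at least `c * t` and
does not raise `d_L`. Now choose `t = min s ((d_K x - (r - δ))⁺ / c)`: this is continuous in `x` and
vanishes on `K_{r-δ}`, and the step either lowers `d_K` by `c * s` or lands in `K_{r-δ}`.
Overshooting into the interior of `K_{r-δ}` is harmless, so no hitting time is involved.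
-/

section Deformation

variable {E : Type*} [TopologicalSpace E] {H : ℝ × E → E} {B F : Set E}

/-- `H` is a homotopy of self-maps of `B`, from the identity and relative to `F`. As in the notion
of deformation retraction used here, `H` is a map on the ambient space and `F` is not required to
lie in `B`. -/
structure IsDeformationRel (H : ℝ × E → E) (B F : Set E) : Prop where
  continuousOn : ContinuousOn H (Set.Icc 0 1 ×ˢ B)
  map_zero : ∀ x ∈ B, H (0, x) = x
  mem : ∀ x ∈ B, ∀ t ∈ Set.Icc (0 : ℝ) 1, H (t, x) ∈ B
  fixed : ∀ y ∈ F, ∀ t ∈ Set.Icc (0 : ℝ) 1, H (t, y) = y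

/-- `H` is a (strong) deformation retraction of `B` onto `F`. -/
structure IsDeformationRetraction (H : ℝ × E → E) (B F : Set E) : Prop
    extends IsDeformationRel H B F where
  map_one_mem : ∀ x ∈ B, H (1, x) ∈ F

theorem IsDeformationRel.iterate (hH : IsDeformationRel H B F) (n : ℕ) :
    IsDeformationRel (fun q => (fun x => H (q.1, x))^[n] q.2) B F := by
  have iterate_mem (t : ℝ) (ht : t ∈ Set.Icc (0 : ℝ) 1) (n : ℕ) :
      Set.MapsTo (fun x => H (t, x))^[n] B B :=
    Set.MapsTo.iterate (fun x hx => hH.mem x hx t ht) n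
  refine ⟨?_, fun x hx => ?_, fun x hx t ht => iterate_mem t ht n hx,
    fun y hy t ht => Function.iterate_fixed (hH.fixed y hy t ht) n⟩
  · induction n with
    | zero => exact continuousOn_snd
    | succ n ih =>
      simp only [Function.iterate_succ_apply']
      exact hH.continuousOn.comp (continuousOn_fst.prodMk ih)
        fun q hq => ⟨hq.1, iterate_mem q.1 hq.1 n hq.2⟩
  · exact Function.iterate_fixed (hH.map_zero x hx) n

end Deformation

theorem apply_iterate_le_max_sub_mul {α : Type*} {B : Set α} {g : α → α} {f : α → ℝ} {a e : ℝ}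
    (he : 0 ≤ e) (hg : Set.MapsTo g B B) (hf : ∀ x ∈ B, f (g x) ≤ max a (f x - e))
    (n : ℕ) {x : α} (hx : x ∈ B) : f (g^[n] x) ≤ max a (f x - n * e) := by
  induction n with
  | zero => simp
  | succ n ih =>
    rw [Function.iterate_succ_apply']
    calc f (g (g^[n] x)) ≤ max a (f (g^[n] x) - e) := hf _ (hg.iterate n hx)
      _ ≤ max a (max a (f x - n * e) - e) := by gcongr
      _ ≤ max a (f x - (n + 1 : ℕ) * e) := by
        rw [← max_sub_sub_right, ← max_assoc, max_eq_left (sub_le_self a he)]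
        push_cast
        apply le_of_eq
        ring_nf

section StepLength

variable {α : Type*} {f : α → ℝ} {a c s : ℝ} {x : α}

/-- The length of a step from `x` that brings `f` down to the level `a` when `f` decreases at rate
`c`, cut off at the maximal length `s`. -/
noncomputable def descentStepLength (f : α → ℝ) (a c s : ℝ) (x : α) : ℝ :=
  min s (max (f x - a) 0 / c)

theorem descentStepLength_eq_zero (hs : 0 ≤ s) (hx : f x ≤ a) :
    descentStepLength f a c s x = 0 := by
  rw [descentStepLength, max_eq_right (sub_nonpos.2 hx), zero_div, min_eq_right hs]

theorem mul_descentStepLength_mem_Icc (hc : 0 ≤ c) (hs : 0 ≤ s) {t : ℝ}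
    (ht : t ∈ Set.Icc (0 : ℝ) 1) : t * descentStepLength f a c s x ∈ Set.Icc 0 s := by
  have length_nonneg : 0 ≤ descentStepLength f a c s x :=
    le_min hs (div_nonneg (le_max_right _ _) hc)
  exact ⟨mul_nonneg ht.1 length_nonneg,
    (mul_le_of_le_one_left length_nonneg ht.2).trans (min_le_left _ _)⟩

theorem sub_mul_descentStepLength (hc : 0 < c) (hx : a ≤ f x) :
    f x - c * descentStepLength f a c s x = max a (f x - c * s) := by
  rw [descentStepLength, max_eq_left (sub_nonneg.2 hx), mul_min_of_nonneg _ _ hc.le,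
    mul_div_cancel₀ _ hc.ne', ← max_sub_sub_left, sub_sub_cancel, max_comm]

end StepLength

section Descent

variable {E : Type*} [AddCommGroup E] [Module ℝ E] {f : E → ℝ} {X : E → E} {B : Set E}
  {a b c s : ℝ}

/-- The homotopy from the identity to the map that takes one descent step along `X`. -/
noncomputable def descentStep (f : E → ℝ) (X : E → E) (a c s : ℝ) (q : ℝ × E) : E :=
  q.2 + (q.1 * descentStepLength f a c s q.2) • X q.2

theorem descentStep_of_le (hs : 0 ≤ s) {x : E} (hx : f x ≤ a) (t : ℝ) :
    descentStep f X a c s (t, x) = x := by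
  simp [descentStep, descentStepLength_eq_zero hs hx]

theorem apply_descentStep_one_le (hc : 0 < c) (hs : 0 ≤ s) {x : E}
    (hdesc : a ≤ f x → ∀ t ∈ Set.Icc 0 s, f (x + t • X x) ≤ f x - c * t) :
    f (descentStep f X a c s (1, x)) ≤ max a (f x - c * s) := by
  rcases le_total a (f x) with hx | hx
  · exact (hdesc hx _ (mul_descentStepLength_mem_Icc hc.le hs (by simp))).trans_eq
      (by rw [one_mul, sub_mul_descentStepLength hc hx])
  · rw [descentStep_of_le hs hx]
    exact le_max_of_le_left hx

variable [TopologicalSpace E] [ContinuousAdd E] [ContinuousSMul ℝ E]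

theorem isDeformationRel_descentStep (hf : ContinuousOn f B) (hX : ContinuousOn X B)
    (hc : 0 ≤ c) (hs : 0 ≤ s)
    (hstay : ∀ x ∈ B, a ≤ f x → ∀ t ∈ Set.Icc 0 s, x + t • X x ∈ B) :
    IsDeformationRel (descentStep f X a c s) B {x | f x ≤ a} where
  continuousOn := by
    have length_continuousOn : ContinuousOn (descentStepLength f a c s) B :=
      continuousOn_const.inf (((hf.sub continuousOn_const).sup continuousOn_const).div_const c)
    have snd_mapsTo : Set.MapsTo Prod.snd (Set.Icc (0 : ℝ) 1 ×ˢ B) B := fun q hq => hq.2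
    exact continuousOn_snd.add
      ((continuousOn_fst.mul (length_continuousOn.comp continuousOn_snd snd_mapsTo)).smul
        (hX.comp continuousOn_snd snd_mapsTo))
  map_zero x _ := by simp [descentStep]
  mem x hx t ht := by
    rcases le_total a (f x) with hax | hxa
    · exact hstay x hx hax _ (mul_descentStepLength_mem_Icc hc hs ht)
    · rwa [descentStep_of_le hs hxa]
  fixed y hy t _ := descentStep_of_le hs hy t

theorem exists_isDeformationRetraction_sublevel (hf : ContinuousOn f B) (hX : ContinuousOn X B)
    (hc : 0 < c) (hs : 0 < s) (hb : ∀ x ∈ B, f x ≤ b)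
    (hstay : ∀ x ∈ B, a ≤ f x → ∀ t ∈ Set.Icc 0 s, x + t • X x ∈ B)
    (hdesc : ∀ x ∈ B, a ≤ f x → ∀ t ∈ Set.Icc 0 s, f (x + t • X x) ≤ f x - c * t) :
    ∃ H, IsDeformationRetraction H B {x | f x ≤ a} := by
  have hstep := isDeformationRel_descentStep hf hX hc.le hs.le hstay
  have hcs : 0 < c * s := mul_pos hc hs
  obtain ⟨n, hn⟩ := exists_nat_ge ((b - a) / (c * s))
  rw [div_le_iff₀ hcs] at hn
  refine ⟨_, hstep.iterate n, fun x hx => ?_⟩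
  have iterate_le := apply_iterate_le_max_sub_mul hcs.le
    (fun y hy => hstep.mem y hy 1 (by simp))
    (fun y hy => apply_descentStep_one_le hc hs.le (hdesc y hy)) n hx
  exact iterate_le.trans (max_le le_rfl (by linarith [hb x hx]))

end Descent

theorem isCompact_setOf_infDist_le {α : Type*} [PseudoMetricSpace α] [ProperSpace α] {M : Set α}
    (hM : IsCompact M) (hne : M.Nonempty) (r : ℝ) : IsCompact {x | infDist x M ≤ r} := by
  refine (hM.cthickening (r := r)).of_isClosed_subset
    (isClosed_le (continuous_infDist_pt M) continuous_const) fun x hx => ?_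
  obtain ⟨p, hp, hxp⟩ := hM.exists_infDist_eq_dist hne x
  exact mem_cthickening_of_dist_le x p r M hp (hxp ▸ hx)

theorem exists_continuous_eqOn_of_continuousOn {α E : Type*} [TopologicalSpace α] [NormalSpace α]
    [NormedAddCommGroup E] [NormedSpace ℝ E] [FiniteDimensional ℝ E] {X : α → E} {A : Set α}
    (hA : IsClosed A) (hX : ContinuousOn X A) : ∃ Y : α → E, Continuous Y ∧ Set.EqOn Y X A := by
  have : TietzeExtension E := .of_tvs ℝ
  obtain ⟨Y, hY⟩ := ContinuousMap.exists_restrict_eq hA ⟨A.domRestrict X, hX.domRestrict⟩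
  exact ⟨Y, Y.continuous, fun x hx => DFunLike.congr_fun hY ⟨x, hx⟩⟩

section InnerProduct

variable {E : Type*} [NormedAddCommGroup E] [InnerProductSpace ℝ E]

theorem inner_pos_of_angle_lt_pi_div_two {u v : E} (h : angle u v < π / 2) : 0 < inner ℝ u v := by
  have cos_angle_pos : 0 < inner ℝ u v / (‖u‖ * ‖v‖) := arccos_lt_pi_div_two.1 h
  exact pos_of_mul_pos_left cos_angle_pos (by positivity)

theorem inner_pos_of_angle_add_angle_lt_pi_div_two {u v w : E}
    (h : angle u w + angle w v < π / 2) : 0 < inner ℝ u v :=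
  inner_pos_of_angle_lt_pi_div_two ((angle_le_angle_add_angle u w v).trans_lt h)

/-- The solid cone with apex `x`, axis `w`, half-angle `β` and slant height `r`; an `r`-spanning
cone `(w, β)` for a set from `x` is one with `solidCone x w β r` containing the part of the set
within distance `r` of `x`. -/
def solidCone (x w : E) (β r : ℝ) : Set E :=
  {y | ∃ t ∈ Set.Icc (0 : ℝ) r, ∃ v : E, ‖v‖ = 1 ∧ angle v w ≤ β ∧ y = x + t • v}

theorem inner_sub_pos_of_mem_solidCone {x y u w : E} {β r : ℝ} (hy : y ∈ solidCone x w β r)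
    (hyx : y ≠ x) (hu : angle u w < π / 2 - β) : 0 < inner ℝ u (y - x) := by
  obtain ⟨t, ht, v, -, hv, rfl⟩ := hy
  have t_pos : 0 < t := ht.1.lt_of_ne (by rintro rfl; simp at hyx)
  rw [add_sub_cancel_left, real_inner_smul_right]
  rw [angle_comm] at hv
  exact mul_pos t_pos (inner_pos_of_angle_add_angle_lt_pi_div_two (w := w) (by linarith))

theorem inner_sub_pos_of_forall_infDist_le {K : Set E} {x p u : E} {δ r : ℝ} (hδ : 0 ≤ δ)
    (hu : ∀ y, infDist y K ≤ δ → dist y x ≤ r → 0 < inner ℝ u (y - x)) (hp : p ∈ K)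
    (hδp : δ < dist p x) (hpr : dist p x ≤ r + δ) : 0 < inner ℝ u (p - x) := by
  have dist_pos : 0 < dist p x := hδ.trans_lt hδp
  have ratio_lt_one : δ / dist p x < 1 := (div_lt_one dist_pos).2 hδp
  have infDist_le : infDist (AffineMap.lineMap p x (δ / dist p x)) K ≤ δ := by
    refine (infDist_le_dist_of_mem hp).trans_eq ?_
    rw [dist_lineMap_left, norm_of_nonneg (by positivity), div_mul_cancel₀ _ dist_pos.ne']
  have dist_le : dist (AffineMap.lineMap p x (δ / dist p x)) x ≤ r := by
    rw [dist_lineMap_right, norm_of_nonneg (sub_nonneg.2 ratio_lt_one.le), one_sub_mul,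
      div_mul_cancel₀ _ dist_pos.ne']
    linarith
  have inner_pos := hu _ infDist_le dist_le
  rw [← vsub_eq_sub, AffineMap.lineMap_vsub_right, vsub_eq_sub, real_inner_smul_right] at inner_pos
  exact pos_of_mul_pos_right inner_pos (sub_nonneg.2 ratio_lt_one.le)

theorem infDist_add_smul_sq_le {M : Set E} {x p u : E} (hp : p ∈ M)
    (hxp : infDist x M = dist x p) (t : ℝ) :
    infDist (x + t • u) M ^ 2 ≤
      infDist x M ^ 2 - 2 * t * inner ℝ u (p - x) + t ^ 2 * ‖u‖ ^ 2 := by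
  calc infDist (x + t • u) M ^ 2 ≤ dist (x + t • u) p ^ 2 := by
        gcongr
        · exact infDist_nonneg
        · exact infDist_le_dist_of_mem hp
    _ = ‖(p - x) - t • u‖ ^ 2 := by rw [dist_comm, dist_eq_norm, sub_sub]
    _ = infDist x M ^ 2 - 2 * t * inner ℝ u (p - x) + t ^ 2 * ‖u‖ ^ 2 := by
        rw [norm_sub_sq_real, real_inner_smul_right, norm_smul, mul_pow, norm_eq_abs, sq_abs,
          hxp, dist_comm, dist_eq_norm, real_inner_comm]
        ring

theorem exists_forall_le_inner_sub_closest {A M : Set E} {X : E → E} (hA : IsCompact A)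
    (hM : IsCompact M) (hX : ContinuousOn X A)
    (hpos : ∀ x ∈ A, ∀ p ∈ M, infDist x M = dist x p → 0 < inner ℝ (X x) (p - x)) :
    ∃ m > 0, ∀ x ∈ A, ∀ p ∈ M, infDist x M = dist x p → m ≤ inner ℝ (X x) (p - x) := by
  have closest_pairs_compact :
      IsCompact ((A ×ˢ M) ∩ {q : E × E | infDist q.1 M = dist q.1 q.2}) :=
    (hA.prod hM).inter_right
      (isClosed_eq ((continuous_infDist_pt M).comp continuous_fst) continuous_dist)
  have inner_continuousOn :
      ContinuousOn (fun q : E × E => inner ℝ (X q.1) (q.2 - q.1))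
        ((A ×ˢ M) ∩ {q : E × E | infDist q.1 M = dist q.1 q.2}) :=
    (hX.comp continuousOn_fst fun q hq => hq.1.1).inner (continuousOn_snd.sub continuousOn_fst)
  obtain ⟨m, m_pos, hm⟩ := closest_pairs_compact.exists_forall_le' inner_continuousOn
    fun q hq => hpos q.1 hq.1.1 q.2 hq.1.2 hq.2
  exact ⟨m, m_pos, fun x hx p hp hxp => hm (x, p) ⟨⟨hx, hp⟩, hxp⟩⟩

theorem exists_infDist_add_smul_sq_le_sub {A M : Set E} {X : E → E} (hA : IsCompact A)
    (hM : IsCompact M) (hne : M.Nonempty) (hX : ContinuousOn X A)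
    (hpos : ∀ x ∈ A, ∀ p ∈ M, infDist x M = dist x p → 0 < inner ℝ (X x) (p - x)) :
    ∃ c > 0, ∃ s > 0, ∀ x ∈ A, ∀ t ∈ Set.Icc 0 s,
      infDist (x + t • X x) M ^ 2 ≤ infDist x M ^ 2 - c * t := by
  obtain ⟨m, m_pos, hm⟩ := exists_forall_le_inner_sub_closest hA hM hX hpos
  obtain ⟨C, C_pos, hC⟩ := (hA.image_of_continuousOn hX).isBounded.exists_pos_norm_le
  refine ⟨m, m_pos, m / C ^ 2, by positivity, fun x hx t ht => ?_⟩
  obtain ⟨p, hp, hxp⟩ := hM.exists_infDist_eq_dist hne x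
  have mul_norm_sq_le : t * ‖X x‖ ^ 2 ≤ m :=
    calc t * ‖X x‖ ^ 2 ≤ t * C ^ 2 := by
          gcongr
          · exact ht.1
          · exact hC _ (Set.mem_image_of_mem X hx)
      _ ≤ m := (le_div_iff₀ (by positivity)).1 ht.2
  calc infDist (x + t • X x) M ^ 2
      ≤ infDist x M ^ 2 - 2 * t * inner ℝ (X x) (p - x) + t ^ 2 * ‖X x‖ ^ 2 :=
        infDist_add_smul_sq_le hp hxp t
    _ ≤ infDist x M ^ 2 - m * t := by
        nlinarith [mul_le_mul_of_nonneg_left (hm x hx p hp hxp) ht.1,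
          mul_le_mul_of_nonneg_left mul_norm_sq_le ht.1]

theorem exists_infDist_add_smul_le_sub {A M : Set E} {X : E → E} (hA : IsCompact A)
    (hM : IsCompact M) (hne : M.Nonempty) (hX : ContinuousOn X A)
    (hpos : ∀ x ∈ A, ∀ p ∈ M, infDist x M = dist x p → 0 < inner ℝ (X x) (p - x)) :
    ∃ c > 0, ∃ s > 0, ∀ x ∈ A, ∀ t ∈ Set.Icc 0 s,
      infDist (x + t • X x) M ≤ infDist x M - c * t := by
  obtain ⟨c, c_pos, s, s_pos, hcs⟩ := exists_infDist_add_smul_sq_le_sub hA hM hne hX hpos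
  obtain ⟨D, D_pos, hD⟩ := (hA.image (continuous_infDist_pt M)).isBounded.exists_pos_norm_le
  refine ⟨c / (2 * D), by positivity, s, s_pos, fun x hx t ht => ?_⟩
  have sq_le := hcs x hx t ht
  have infDist_le : infDist x M ≤ D :=
    (le_norm_self _).trans (hD _ (Set.mem_image_of_mem _ hx))
  have decreasing : infDist (x + t • X x) M ≤ infDist x M :=
    le_of_sq_le_sq (by linarith [mul_nonneg c_pos.le ht.1]) infDist_nonneg
  have scaled_le : c * t ≤ (infDist x M - infDist (x + t • X x) M) * (2 * D) :=
    calc c * t ≤ infDist x M ^ 2 - infDist (x + t • X x) M ^ 2 := by linarith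
      _ = (infDist x M - infDist (x + t • X x) M) * (infDist x M + infDist (x + t • X x) M) := by
        ring
      _ ≤ (infDist x M - infDist (x + t • X x) M) * (2 * D) :=
        mul_le_mul_of_nonneg_left (by linarith) (sub_nonneg.2 decreasing)
  rw [div_mul_eq_mul_div, le_sub_comm]
  exact (div_le_iff₀ (by positivity)).2 scaled_le

theorem exists_isDeformationRetraction_offset_of_inner_pos [FiniteDimensional ℝ E] {K L : Set E}
    {X : E → E} {r ρ : ℝ} (hKc : IsCompact K) (hKne : K.Nonempty) (hLc : IsCompact L)
    (hLne : L.Nonempty) (hX : Continuous X)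
    (hK : ∀ x, infDist x L ≤ r → ρ ≤ infDist x K →
      ∀ p ∈ K, infDist x K = dist x p → 0 < inner ℝ (X x) (p - x))
    (hL : ∀ x, infDist x L ≤ r → ρ ≤ infDist x K →
      ∀ p ∈ L, infDist x L = dist x p → 0 < inner ℝ (X x) (p - x)) :
    ∃ H, IsDeformationRetraction H {x | infDist x L ≤ r} {x | infDist x K ≤ ρ} := by
  have hB := isCompact_setOf_infDist_le hLc hLne r
  have hA : IsCompact ({x | infDist x L ≤ r} ∩ {x | ρ ≤ infDist x K}) :=
    hB.inter_right (isClosed_le continuous_const (continuous_infDist_pt K))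
  obtain ⟨b, hb⟩ := hB.bddAbove_image (continuous_infDist_pt K).continuousOn
  obtain ⟨cK, cK_pos, sK, sK_pos, descentK⟩ := exists_infDist_add_smul_le_sub hA hKc hKne
    hX.continuousOn fun x hx => hK x hx.1 hx.2
  obtain ⟨cL, cL_pos, sL, sL_pos, descentL⟩ := exists_infDist_add_smul_le_sub hA hLc hLne
    hX.continuousOn fun x hx => hL x hx.1 hx.2
  refine exists_isDeformationRetraction_sublevel (X := X)
    (continuous_infDist_pt K).continuousOn hX.continuousOn cK_pos (lt_min sK_pos sL_pos)
    (fun x hx => hb (Set.mem_image_of_mem _ hx)) (fun x hxL hxK t ht => ?_)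
    (fun x hxL hxK t ht => ?_)
  · calc infDist (x + t • X x) L ≤ infDist x L - cL * t :=
          descentL x ⟨hxL, hxK⟩ t ⟨ht.1, ht.2.trans (min_le_right _ _)⟩
      _ ≤ infDist x L := sub_le_self _ (mul_nonneg cL_pos.le ht.1)
      _ ≤ r := hxL
  · exact descentK x ⟨hxL, hxK⟩ t ⟨ht.1, ht.2.trans (min_le_left _ _)⟩

end InnerProduct

theorem stmt4_general {E : Type*} [NormedAddCommGroup E] [InnerProductSpace ℝ E]
    [FiniteDimensional ℝ E] {δ r : ℝ} (hδr : δ < r / 2) {K L : Set E} (hKne : K.Nonempty)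
    (hKc : IsCompact K) (hLne : L.Nonempty) (hLc : IsCompact L) (hKL : hausdorffDist K L ≤ δ)
    {X : E → E} (hX : ContinuousOn X {x | r - δ ≤ infDist x K ∧ infDist x K ≤ r + δ})
    (hpos : ∀ x ∈ {x | r - δ ≤ infDist x K ∧ infDist x K ≤ r + δ},
      ∀ y, infDist y K ≤ δ → dist y x ≤ r → 0 < inner ℝ (X x) (y - x)) :
    ∃ H, IsDeformationRetraction H {x | infDist x L ≤ r} {x | infDist x K ≤ r - δ} := by
  have hδ : 0 ≤ δ := hausdorffDist_nonneg.trans hKL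
  have edist_ne_top : hausdorffEDist L K ≠ ⊤ :=
    hausdorffEDist_ne_top_of_nonempty_of_bounded hLne hKne hLc.isBounded hKc.isBounded
  rw [hausdorffDist_comm] at hKL
  have infDist_K_le (x : E) (hx : infDist x L ≤ r) : infDist x K ≤ r + δ :=
    (infDist_le_infDist_add_hausdorffDist edist_ne_top).trans (add_le_add hx hKL)
  have annulus_closed : IsClosed {x | r - δ ≤ infDist x K ∧ infDist x K ≤ r + δ} :=
    isClosed_Icc.preimage (continuous_infDist_pt K)
  obtain ⟨Y, hY, hYX⟩ := exists_continuous_eqOn_of_continuousOn annulus_closed hX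
  refine exists_isDeformationRetraction_offset_of_inner_pos hKc hKne hLc hLne hY
    (fun x hxL hxK p hp hxp => ?_) (fun x hxL hxK p hp hxp => ?_)
  · have hxA := And.intro hxK (infDist_K_le x hxL)
    rw [dist_comm] at hxp
    rw [hYX hxA]
    exact inner_sub_pos_of_forall_infDist_le hδ (hpos x hxA) hp (by linarith) (hxp ▸ hxA.2)
  · have hxA := And.intro hxK (infDist_K_le x hxL)
    rw [hYX hxA]
    exact hpos x hxA p ((infDist_le_hausdorffDist_of_mem hp edist_ne_top).trans hKL)
      (by rwa [dist_comm, ← hxp])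

/-- If an acute `r`-spanning cone field for `K_δ` exists over the annulus `K_[r−δ,r+δ]` and
`X` is a smooth unit vector field strictly subordinate to the complementary cone field, then
there is a deformation retraction of `L_r` onto `K_{r−δ}`. -/
theorem stmt4 {E : Type*} [NormedAddCommGroup E] [InnerProductSpace ℝ E]
    [FiniteDimensional ℝ E]
    (δ r : ℝ) (hδ : 0 < δ) (hδr : δ < r / 2)
    (K L : Set E) (hKne : K.Nonempty) (hKc : IsCompact K)
    (hLne : L.Nonempty) (hLc : IsCompact L)
    (hH : hausdorffDist K L ≤ δ)
    (w : E → E) (β : E → ℝ)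
    (hcone : ∀ x ∈ {x : E | r - δ ≤ infDist x K ∧ infDist x K ≤ r + δ},
      ‖w x‖ = 1 ∧ β x ∈ Set.Ico 0 (π / 2) ∧
      ({y : E | infDist y K ≤ δ} ∩ closedBall x r).Nonempty ∧
      {y : E | infDist y K ≤ δ} ∩ closedBall x r ⊆
        {y : E | ∃ t ∈ Set.Icc (0 : ℝ) r, ∃ v : E, ‖v‖ = 1 ∧
          InnerProductGeometry.angle v (w x) ≤ β x ∧ y = x + t • v})
    (X : E → E) (hX : ContDiff ℝ (⊤ : ℕ∞) X)
    (hXsub : ∀ x ∈ {x : E | r - δ ≤ infDist x K ∧ infDist x K ≤ r + δ},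
      ‖X x‖ = 1 ∧ InnerProductGeometry.angle (X x) (w x) < π / 2 - β x) :
    ∃ H : ℝ × E → E,
      ContinuousOn H (Set.Icc (0 : ℝ) 1 ×ˢ {x : E | infDist x L ≤ r}) ∧
      (∀ x ∈ {x : E | infDist x L ≤ r}, H (0, x) = x) ∧
      (∀ x ∈ {x : E | infDist x L ≤ r}, ∀ t ∈ Set.Icc (0 : ℝ) 1,
        H (t, x) ∈ {y : E | infDist y L ≤ r}) ∧
      (∀ x ∈ {x : E | infDist x L ≤ r}, H (1, x) ∈ {y : E | infDist y K ≤ r - δ}) ∧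
      (∀ y ∈ {y : E | infDist y K ≤ r - δ}, ∀ t ∈ Set.Icc (0 : ℝ) 1, H (t, y) = y) := by
  have hpos (x : E) (hx : r - δ ≤ infDist x K ∧ infDist x K ≤ r + δ) (y : E)
      (hy : infDist y K ≤ δ) (hyx : dist y x ≤ r) : 0 < inner ℝ (X x) (y - x) :=
    inner_sub_pos_of_mem_solidCone ((hcone x hx).2.2.2 ⟨hy, hyx⟩)
      (by rintro rfl; linarith [hx.1]) (hXsub x hx).2
  obtain ⟨H, hret⟩ := stmt4_general hδr hKne hKc hLne hLc hH hX.continuous.continuousOn hpos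
  exact ⟨H, hret.continuousOn, hret.map_zero, hret.mem, hret.map_one_mem, hret.fixed⟩
end

section
/- Let E be a finite-dimensional real inner product space, K ⊆ E a nonempty compact set, μ ∈ [0,1], and let x ∉ K be a μ-critical point of d_K. Then for every y ∈ E, d_K(y)² ≤ d_K(x)² + dist(x,y)² + 2·μ·dist(x,y)·d_K(x). -/
open Metric

/-!
The function `z ↦ dist y z ^ 2 - dist x z ^ 2` is affine. At a point of `K` closest to `x` it is at
least `d_K(y)² - d_K(x)²`, and hence also on the convex hull of those points. At any `z`, the
triangle inequality `dist y z ≤ dist x y + dist x z` bounds it above by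
`dist x y ^ 2 + 2 * dist x y * dist x z`; take the infimum over `z` in the hull.
-/

theorem dist_sq_sub_dist_sq_le {X : Type*} [PseudoMetricSpace X] (x y z : X) :
    dist y z ^ 2 - dist x z ^ 2 ≤ dist x y ^ 2 + 2 * dist x y * dist x z := by
  have triangle : dist y z ≤ dist x y + dist x z := dist_triangle_left y z x
  calc
    dist y z ^ 2 - dist x z ^ 2 ≤ (dist x y + dist x z) ^ 2 - dist x z ^ 2 := by gcongr
    _ = dist x y ^ 2 + 2 * dist x y * dist x z := by ring

section

variable {E : Type*} [SeminormedAddCommGroup E] [InnerProductSpace ℝ E]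

theorem dist_sq_sub_dist_sq_eq_inner (x y z : E) :
    dist y z ^ 2 - dist x z ^ 2 = ‖y‖ ^ 2 - ‖x‖ ^ 2 + 2 * inner ℝ (x - y) z := by
  rw [dist_eq_norm, dist_eq_norm, norm_sub_sq_real, norm_sub_sq_real, inner_sub_left]
  ring

theorem convex_setOf_le_dist_sq_sub_dist_sq (x y : E) (c : ℝ) :
    Convex ℝ {z : E | c ≤ dist y z ^ 2 - dist x z ^ 2} := by
  have halfSpace : {z : E | c ≤ dist y z ^ 2 - dist x z ^ 2} =
      {z : E | (c - (‖y‖ ^ 2 - ‖x‖ ^ 2)) / 2 ≤ inner ℝ (x - y) z} := by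
    ext z
    rw [Set.mem_ofPred_eq, Set.mem_ofPred_eq, dist_sq_sub_dist_sq_eq_inner, div_le_iff₀' two_pos,
      sub_le_iff_le_add']
  rw [halfSpace]
  exact convex_halfSpace_ge (innerₛₗ ℝ (x - y)).isLinear _

theorem le_dist_sq_add_mul_infDist_convexHull {s : Set E} (hs : s.Nonempty) {x y : E} {c : ℝ}
    (hc : ∀ q ∈ s, c ≤ dist y q ^ 2 - dist x q ^ 2) :
    c ≤ dist x y ^ 2 + 2 * dist x y * infDist x (convexHull ℝ s) := by
  have le_on_hull : ∀ z ∈ convexHull ℝ s, c ≤ dist y z ^ 2 - dist x z ^ 2 :=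
    convexHull_min hc (convex_setOf_le_dist_sq_sub_dist_sq x y c)
  have : Nonempty (convexHull ℝ s) := hs.convexHull.to_subtype
  rw [← sub_le_iff_le_add', infDist_eq_iInf, Real.mul_iInf_of_nonneg (by positivity)]
  exact le_ciInf fun z ↦ sub_le_iff_le_add'.2 <|
    (le_on_hull z z.2).trans (dist_sq_sub_dist_sq_le x y z)

theorem stmt5_general {K : Set E} {x : E} {μ : ℝ}
    (hne : {q ∈ K | dist x q = infDist x K}.Nonempty)
    (hcrit : infDist x (convexHull ℝ {q ∈ K | dist x q = infDist x K}) ≤ μ * infDist x K) (y : E) :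
    infDist y K ^ 2 ≤ infDist x K ^ 2 + dist x y ^ 2 + 2 * μ * dist x y * infDist x K := by
  have le_on_nearest : ∀ q ∈ {q ∈ K | dist x q = infDist x K},
      infDist y K ^ 2 - infDist x K ^ 2 ≤ dist y q ^ 2 - dist x q ^ 2 := by
    rintro q ⟨hqK, hq⟩
    rw [hq]
    gcongr
    · exact infDist_nonneg
    · exact infDist_le_dist_of_mem hqK
  rw [add_assoc, ← sub_le_iff_le_add']
  calc
    infDist y K ^ 2 - infDist x K ^ 2
      ≤ dist x y ^ 2 +
          2 * dist x y * infDist x (convexHull ℝ {q ∈ K | dist x q = infDist x K}) :=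
        le_dist_sq_add_mul_infDist_convexHull hne le_on_nearest
    _ ≤ dist x y ^ 2 + 2 * dist x y * (μ * infDist x K) := by gcongr
    _ = dist x y ^ 2 + 2 * μ * dist x y * infDist x K := by ring

end

/-- Euclidean (curvature-0) case of the Toponogov comparison lemma for μ-critical points:
if `x ∉ K` is μ-critical for the distance function to `K`, then for every `y`,
`d_K(y)² ≤ d_K(x)² + dist(x,y)² + 2 μ dist(x,y) d_K(x)`. -/
theorem stmt5 {E : Type*} [NormedAddCommGroup E] [InnerProductSpace ℝ E]
    [FiniteDimensional ℝ E]
    (K : Set E) (hKne : K.Nonempty) (hKc : IsCompact K)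
    (μ : ℝ) (hμ : μ ∈ Set.Icc (0 : ℝ) 1) (x : E) (hx : x ∉ K)
    (hcrit : infDist x (convexHull ℝ {q ∈ K | dist x q = infDist x K}) ≤ μ * infDist x K) :
    ∀ y : E, (infDist y K) ^ 2 ≤
      (infDist x K) ^ 2 + (dist x y) ^ 2 + 2 * μ * dist x y * infDist x K := by
  obtain ⟨q, hqK, hq⟩ := hKc.exists_infDist_eq_dist hKne x
  exact stmt5_general ⟨q, hqK, hq.symm⟩ hcrit
end

section
/- Let X be a metric space, f : X → ℝ locally Lipschitz, x ∈ X with f(x) = 0, and μ, r > 0. Assume Metric.closedBall x r is a complete set (IsComplete), and that for every z ∈ X with dist(z,x) < r and f(z) ≥ 0 one has |∇_z f| ≥ μ, where |∇_z f| := max(0, limsup_{y → z, y ≠ z} (f(y) − f(z))/dist(y,z)). Then for every C with 0 < C < μ there exists a point z ∈ X with dist(z,x) ≤ r and f(z) = C·r. -/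
open Metric Filter

/-!
The theorem follows from Ekeland's variational principle. Order the points of
`S = closedBall x r ∩ {f ≤ f x + C * r}` by letting `y` dominate `z` when `f` increases by at least
`C * dist z y` from `z` to `y`. As `S` is complete and `f` is bounded above on it, some maximal
point `m` dominates `x`. If `f m < f x + C * r`, then `m` lies in the open ball and `S` is a
neighborhood of `m`, so an ascending slope larger than `C` at `m` contradicts maximality.
-/

open Set Topology

section Ekeland

variable {X : Type*} [PseudoMetricSpace X] {f : X → ℝ} {C : ℝ} {y z : X}

/-- The points to which `f` ascends from `z` at average rate at least `C`; for `0 ≤ C`, membership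
`y ∈ ascentSet f C z` is the preorder of Ekeland's variational principle. -/
def ascentSet (f : X → ℝ) (C : ℝ) (z : X) : Set X :=
  {y | f z + C * dist z y ≤ f y}

theorem self_mem_ascentSet (f : X → ℝ) (C : ℝ) (z : X) : z ∈ ascentSet f C z := by
  simp [ascentSet]

theorem ascentSet_subset_ascentSet (hC : 0 ≤ C) (hy : y ∈ ascentSet f C z) :
    ascentSet f C y ⊆ ascentSet f C z := fun w hw ↦
  calc f z + C * dist z w
    _ ≤ f z + C * (dist z y + dist y w) := by gcongr; exact dist_triangle z y w
    _ = (f z + C * dist z y) + C * dist y w := by ring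
    _ ≤ f y + C * dist y w := by gcongr; exact hy
    _ ≤ f w := hw

theorem isClosed_ascentSet (hf : UpperSemicontinuous f) (C : ℝ) (z : X) :
    IsClosed (ascentSet f C z) := by
  have hcont : Continuous fun y ↦ -(C * dist z y) := by fun_prop
  convert (hf.add hcont.upperSemicontinuous).isClosed_preimage (f z) using 1
  ext y
  simp [ascentSet, ← sub_eq_add_neg, le_sub_iff_add_le]

theorem exists_mem_ascentSet_forall_dist_le (hbdd : BddAbove (range f)) (hC : 0 < C) (z : X)
    {ε : ℝ} (hε : 0 < ε) :
    ∃ y ∈ ascentSet f C z, ∀ w ∈ ascentSet f C y, dist y w ≤ ε := by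
  have hne : (f '' ascentSet f C z).Nonempty := ⟨f z, z, self_mem_ascentSet f C z, rfl⟩
  obtain ⟨_, ⟨y, hy, rfl⟩, hsup⟩ :=
    exists_lt_of_lt_csSup hne (sub_lt_self _ (mul_pos hC hε))
  refine ⟨y, hy, fun w hw ↦ le_of_mul_le_mul_left ?_ hC⟩
  have hw_le : f w ≤ sSup (f '' ascentSet f C z) :=
    le_csSup (hbdd.mono (image_subset_range _ _))
      ⟨w, ascentSet_subset_ascentSet hC.le hy hw, rfl⟩
  have hyw : f y + C * dist y w ≤ f w := hw
  linarith

theorem exists_seq_mem_ascentSet_forall_dist_le (hbdd : BddAbove (range f)) (hC : 0 < C) (x : X) :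
    ∃ u : ℕ → X, (∀ n, u n ∈ ascentSet f C x) ∧ Antitone (fun n ↦ ascentSet f C (u n)) ∧
      ∀ n, ∀ w ∈ ascentSet f C (u n), dist (u n) w ≤ 1 / ((n : ℝ) + 1) := by
  choose next hnext_mem hnext_dist using fun (n : ℕ) (z : X) ↦
    exists_mem_ascentSet_forall_dist_le hbdd hC z (Nat.one_div_pos_of_nat (α := ℝ) (n := n))
  let v : ℕ → X := fun n ↦ Nat.rec x next n
  have hv : Antitone fun n ↦ ascentSet f C (v n) :=
    antitone_nat_of_succ_le fun n ↦ ascentSet_subset_ascentSet hC.le (hnext_mem n (v n))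
  exact ⟨fun n ↦ v (n + 1), fun n ↦ hv (Nat.zero_le (n + 1)) (self_mem_ascentSet f C _),
    fun _ _ hnk ↦ hv (Nat.succ_le_succ hnk), fun n ↦ hnext_dist n (v n)⟩

/-- **Ekeland's variational principle**, for maxima. -/
theorem exists_mem_ascentSet_forall_dist_eq_zero [CompleteSpace X] (hf : UpperSemicontinuous f)
    (hbdd : BddAbove (range f)) (hC : 0 < C) (x : X) :
    ∃ m ∈ ascentSet f C x, ∀ y ∈ ascentSet f C m, dist m y = 0 := by
  obtain ⟨u, hux, hanti, hdist⟩ := exists_seq_mem_ascentSet_forall_dist_le hbdd hC x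
  have hmem : ∀ n k, n ≤ k → u k ∈ ascentSet f C (u n) := fun n k hnk ↦
    hanti hnk (self_mem_ascentSet f C (u k))
  have hlim := tendsto_one_div_add_atTop_nhds_zero_nat (𝕜 := ℝ)
  obtain ⟨m, hm⟩ := cauchySeq_tendsto_of_complete <|
    cauchySeq_of_le_tendsto_0' _ (fun n k hnk ↦ hdist n _ (hmem n k hnk)) hlim
  have hm_mem : ∀ n, m ∈ ascentSet f C (u n) := fun n ↦
    (isClosed_ascentSet hf C (u n)).mem_of_tendsto hm ((eventually_ge_atTop n).mono (hmem n))
  refine ⟨m, ascentSet_subset_ascentSet hC.le (hux 0) (hm_mem 0), fun y hy ↦ ?_⟩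
  have hy_lim : Tendsto u atTop (𝓝 y) := tendsto_iff_dist_tendsto_zero.2 <|
    squeeze_zero (fun _ ↦ dist_nonneg)
      (fun n ↦ hdist n y (ascentSet_subset_ascentSet hC.le (hm_mem n) hy)) hlim
  exact tendsto_nhds_unique_dist hm hy_lim

end Ekeland

theorem isComplete_inter_of_isClosed {X : Type*} [UniformSpace X] {s t : Set X}
    (hs : IsComplete s) (ht : IsClosed t) : IsComplete (s ∩ t) := by
  intro l hl hle
  obtain ⟨x, hxs, hlx⟩ := hs l hl (hle.trans (principal_mono.2 inter_subset_left))
  have := hl.1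
  have hlt : t ∈ l := mem_of_superset (le_principal_iff.1 hle) inter_subset_right
  exact ⟨x, ⟨hxs, ht.mem_of_tendsto (f := id) hlx hlt⟩, hlx⟩

-- An ill-defined `limsup` in `ℝ` has the junk value `0`, so one exceeding some `c ≥ 0` is genuine.
theorem frequently_lt_of_nonneg_of_lt_limsup {α : Type*} {l : Filter α} {u : α → ℝ} {c : ℝ}
    (hc : 0 ≤ c) (h : c < limsup u l) : ∃ᶠ a in l, c < u a := by
  intro hle
  simp only [not_lt] at hle
  rw [limsup_eq] at h
  by_cases hbdd : BddBelow {a | ∀ᶠ n in l, u n ≤ a}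
  · exact h.not_ge (csInf_le hbdd hle)
  · exact h.not_ge (Real.sInf_of_not_bddBelow hbdd ▸ hc)

section Slope

variable {X : Type*} [PseudoMetricSpace X] {f : X → ℝ} {C r : ℝ} {x y z : X}

theorem dist_pos_of_lt_div_dist (hC : 0 ≤ C) (h : C < (f y - f z) / dist y z) :
    0 < dist y z := by
  refine dist_nonneg.lt_of_ne' fun h0 ↦ ?_
  rw [h0, div_zero] at h
  exact h.not_ge hC

theorem mem_ascentSet_of_lt_div_dist (hC : 0 ≤ C) (h : C < (f y - f z) / dist y z) :
    y ∈ ascentSet f C z := by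
  rw [lt_div_iff₀ (dist_pos_of_lt_div_dist hC h), dist_comm] at h
  exact (lt_sub_iff_add_lt'.1 h).le

theorem exists_maximal_ascentSet_of_continuousOn_closedBall (hr : 0 ≤ r) (hC : 0 < C)
    (hf : ContinuousOn f (closedBall x r)) (hcomp : IsComplete (closedBall x r)) :
    ∃ m ∈ ascentSet f C x, f m ≤ f x + C * r ∧
      ∀ y ∈ closedBall x r, f y ≤ f x + C * r → y ∈ ascentSet f C m → dist m y = 0 := by
  let S : Set X := closedBall x r ∩ f ⁻¹' Iic (f x + C * r)
  have hS_closed : IsClosed S := hf.preimage_isClosed_of_isClosed isClosed_closedBall isClosed_Iic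
  have hS_complete : IsComplete S := by
    simpa only [S, ← inter_assoc, inter_self] using isComplete_inter_of_isClosed hcomp hS_closed
  have : CompleteSpace S := completeSpace_coe_iff_isComplete.2 hS_complete
  have hfS : Continuous fun z : S ↦ f z := (hf.mono inter_subset_left).domRestrict
  have hbdd : BddAbove (range fun z : S ↦ f z) :=
    ⟨f x + C * r, forall_mem_range.2 fun z ↦ z.2.2⟩
  have hxS : x ∈ S := ⟨mem_closedBall_self hr, le_add_of_nonneg_right (mul_nonneg hC.le hr)⟩
  obtain ⟨m, hxm, hmax⟩ :=
    exists_mem_ascentSet_forall_dist_eq_zero hfS.upperSemicontinuous hbdd hC ⟨x, hxS⟩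
  exact ⟨m, hxm, m.2.2, fun y hy hfy hmy ↦ hmax ⟨y, hy, hfy⟩ hmy⟩

theorem exists_dist_le_eq_add_mul_of_frequently_lt_div_dist (hr : 0 ≤ r) (hC : 0 < C)
    (hf : ContinuousOn f (closedBall x r)) (hcomp : IsComplete (closedBall x r))
    (hslope : ∀ z, dist z x < r → f x ≤ f z → ∃ᶠ y in 𝓝[≠] z, C < (f y - f z) / dist y z) :
    ∃ z, dist z x ≤ r ∧ f z = f x + C * r := by
  obtain ⟨m, hxm, hm_le, hmax⟩ :=
    exists_maximal_ascentSet_of_continuousOn_closedBall hr hC hf hcomp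
  have hxm : f x + C * dist m x ≤ f m := dist_comm x m ▸ hxm
  have hm_dist : dist m x ≤ r := le_of_mul_le_mul_left (by linarith) hC
  refine ⟨m, hm_dist, hm_le.eq_of_not_lt fun hm_lt ↦ ?_⟩
  have hm_dist_lt : dist m x < r := lt_of_mul_lt_mul_left (by linarith) hC.le
  have hfxm : f x ≤ f m := (le_add_of_nonneg_right (by positivity)).trans hxm
  have hball : closedBall x r ∈ 𝓝 m := closedBall_mem_nhds_of_mem hm_dist_lt
  have hnear : ∀ᶠ y in 𝓝[≠] m, y ∈ closedBall x r ∧ f y < f x + C * r :=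
    nhdsWithin_le_nhds <|
      Filter.Eventually.and hball ((hf.continuousAt hball).eventually_lt_const hm_lt)
  obtain ⟨y, hy_slope, hy_ball, hy_lt⟩ :=
    ((hslope m hm_dist_lt hfxm).and_eventually hnear).exists
  have hdist := hmax y hy_ball hy_lt.le (mem_ascentSet_of_lt_div_dist hC.le hy_slope)
  exact (dist_pos_of_lt_div_dist hC.le hy_slope).ne' (dist_comm y m ▸ hdist)

end Slope

theorem stmt6_general {X : Type*} [PseudoMetricSpace X] {f : X → ℝ} {x : X} {μ r C : ℝ}
    (hr : 0 ≤ r) (hf : ContinuousOn f (closedBall x r)) (hcomp : IsComplete (closedBall x r))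
    (hgrad : ∀ z, dist z x < r → f x ≤ f z →
      μ ≤ max 0 (limsup (fun y ↦ (f y - f z) / dist y z) (𝓝[≠] z)))
    (hC0 : 0 < C) (hCμ : C < μ) :
    ∃ z, dist z x ≤ r ∧ f z = f x + C * r := by
  refine exists_dist_le_eq_add_mul_of_frequently_lt_div_dist hr hC0 hf hcomp fun z hzx hfz ↦ ?_
  have hC_lt_limsup := (lt_max_iff.1 (hCμ.trans_le (hgrad z hzx hfz))).resolve_left hC0.not_gt
  exact frequently_lt_of_nonneg_of_lt_limsup hC0.le hC_lt_limsup

/-- Lytchak's Lemma 4.1: if a locally Lipschitz function vanishes at `x` and has descending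
gradient norm at least `μ` at every nonnegative point of the open ball of radius `r`, then
for every `0 < C < μ` there is a point `z` with `dist z x ≤ r` and `f z = C * r`. -/
theorem stmt6 {X : Type*} [MetricSpace X] (f : X → ℝ) (hf : LocallyLipschitz f)
    (x : X) (hfx : f x = 0) (μ r : ℝ) (hμ : 0 < μ) (hr : 0 < r)
    (hcomp : IsComplete (closedBall x r))
    (hgrad : ∀ z : X, dist z x < r → 0 ≤ f z →
      μ ≤ max 0 (limsup (fun y => (f y - f z) / dist y z) (nhdsWithin z {z}ᶜ)))
    (C : ℝ) (hC0 : 0 < C) (hCμ : C < μ) :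
    ∃ z : X, dist z x ≤ r ∧ f z = C * r := by
  simpa only [hfx, zero_add] using
    stmt6_general hr.le hf.continuous.continuousOn hcomp (hfx ▸ hgrad) hC0 hCμ
end

section
/- Let E be a finite-dimensional real inner product space, let K, L ⊆ E be nonempty compact sets with hausdorffDist K L ≤ δ, δ > 0, 0 < a ≤ b, μ ∈ [0,1), and let C satisfy μ < C ≤ 1 and C ≥ μ + 2·√(δ/(a+δ)). If no point y ∉ L with d_L(y) ∈ [a, b] is a C-critical point of d_L, then no point x ∉ K with d_K(x) ∈ [a+δ, b − 4δ/(C−μ) − δ] is a μ-critical point of d_K. -/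
open Metric

/-!
Suppose `x` is `μ`-critical for `K`. Along every direction `y - x`, some nearest point of `x` is
at least as far out as a given point of the convex hull of the nearest points, so `d_K` grows at
most like `d_K(y)² ≤ d² + 2μd‖y - x‖ + ‖y - x‖²` with `d = d_K(x)`. On the other hand, at a point
`y` that is not `C`-critical for `L`, moving away from the convex hull of the nearest points
increases `d_L` at rate greater than `C`. Maximising `d_L(y) - C‖y - x‖` over the closed ball of
radius `s = 4δ / (C - μ)` around `x` therefore yields a point on the bounding sphere where
`d_L(y) ≥ d_L(x) + Cs`. The distance functions differ by at most `δ`, so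
`d_K(y) ≥ d + Cs - 2δ = d + μs + 2δ`, which contradicts the growth bound because `s² ≤ 4δd`.
-/

open Topology Filter

section PseudoMetric

variable {X : Type*} [PseudoMetricSpace X] {K L U : Set X} {x y : X}

/-- The set `Γ_K(x)` of points of `K` closest to `x`. -/
def nearestPoints (K : Set X) (x : X) : Set X :=
  {q ∈ K | dist x q = infDist x K}

lemma nearestPoints_nonempty [ProperSpace X] (hK : IsClosed K) (hne : K.Nonempty) (x : X) :
    (nearestPoints K x).Nonempty :=
  let ⟨q, hqK, hq⟩ := hK.exists_infDist_eq_dist hne x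
  ⟨q, hqK, hq.symm⟩

lemma eventually_nearestPoints_subset [ProperSpace X] (hL : IsClosed L) (hU : IsOpen U)
    (hLU : nearestPoints L y ⊆ U) : ∀ᶠ z in 𝓝 y, nearestPoints L z ⊆ U := by
  rcases (L \ U).eq_empty_or_nonempty with hempty | hne
  · exact .of_forall fun z q hq ↦ Set.sdiff_eq_empty.1 hempty hq.1
  obtain ⟨p, ⟨hpL, hpU⟩, hp⟩ := (hL.sdiff hU).exists_infDist_eq_dist hne y
  have hlt : infDist y L < infDist y (L \ U) := by
    rw [hp]
    exact (infDist_le_dist_of_mem hpL).lt_of_ne fun heq ↦ hpU (hLU ⟨hpL, heq.symm⟩)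
  filter_upwards [(continuous_infDist_pt L).continuousAt.eventually_lt
    (continuous_infDist_pt (L \ U)).continuousAt hlt] with z hz q ⟨hqL, hq⟩
  by_contra hqU
  exact (hz.trans_le (infDist_le_dist_of_mem ⟨hqL, hqU⟩)).ne' hq

lemma infDist_le_infDist_add_of_hausdorffEDist_le {δ : ℝ} (hδ : 0 ≤ δ)
    (h : hausdorffEDist K L ≤ ENNReal.ofReal δ) (x : X) : infDist x L ≤ infDist x K + δ := by
  have hfin : hausdorffEDist K L ≠ ⊤ := ne_top_of_le_ne_top ENNReal.ofReal_ne_top h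
  calc infDist x L ≤ infDist x K + hausdorffDist K L := infDist_le_infDist_add_hausdorffDist hfin
    _ ≤ infDist x K + δ := by gcongr; exact ENNReal.toReal_le_of_le_ofReal hδ h

lemma exists_dist_eq_and_add_mul_le_of_frequently_lt [ProperSpace X] {f : X → ℝ} {C s : ℝ}
    (hC : 0 ≤ C) (hs : 0 ≤ s) (hf : ContinuousOn f (closedBall x s))
    (hascent : ∀ y ∈ ball x s, f x + C * dist y x ≤ f y → ∃ᶠ z in 𝓝 y, f y + C * dist z y < f z) :
    ∃ y, dist y x = s ∧ f x + C * s ≤ f y := by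
  have hx : x ∈ closedBall x s := mem_closedBall_self hs
  obtain ⟨y, hy, hmax⟩ := (isCompact_closedBall x s).exists_isMaxOn
    (f := fun y ↦ f y - C * dist y x) ⟨x, hx⟩ (by fun_prop)
  have hxy : f x + C * dist y x ≤ f y := by
    have : f x - C * dist x x ≤ f y - C * dist y x := hmax hx
    rw [dist_self] at this
    linarith
  rcases (mem_closedBall.1 hy).lt_or_eq with hlt | heq
  · obtain ⟨z, hz, hzs⟩ := ((hascent y hlt hxy).and_eventually (isOpen_ball.mem_nhds hlt)).exists
    have hzy : f z - C * dist z x ≤ f y - C * dist y x := hmax (ball_subset_closedBall hzs)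
    have htri : C * dist z x ≤ C * (dist z y + dist y x) := by gcongr; exact dist_triangle z y x
    linarith
  · exact ⟨y, heq, heq ▸ hxy⟩

end PseudoMetric

section InnerProduct

variable {E : Type*} [NormedAddCommGroup E] [InnerProductSpace ℝ E] {K L S : Set E} {x y : E}
  {a b C d r δ μ : ℝ}

/-- `x` is a `μ`-critical point of the distance function to `K`: it lies off `K`, and its distance
to the convex hull of its nearest points in `K` is at most `μ` times its distance to `K`. -/
def IsCriticalPoint (K : Set E) (μ : ℝ) (x : E) : Prop :=
  x ∉ K ∧ infDist x (convexHull ℝ (nearestPoints K x)) ≤ μ * infDist x K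

lemma infDist_convexHull_nearestPoints_le (hne : (nearestPoints K x).Nonempty) :
    infDist x (convexHull ℝ (nearestPoints K x)) ≤ infDist x K := by
  obtain ⟨q, hq⟩ := hne
  exact (infDist_le_dist_of_mem (subset_convexHull ℝ _ hq)).trans_eq hq.2

lemma infDist_sq_le_of_mem_convexHull_nearestPoints {p : E}
    (hp : p ∈ convexHull ℝ (nearestPoints K x)) (y : E) :
    infDist y K ^ 2 ≤ infDist x K ^ 2 + 2 * dist y x * dist x p + dist y x ^ 2 := by
  obtain ⟨q, ⟨hqK, hq⟩, hpq⟩ : ∃ q ∈ nearestPoints K x, inner ℝ (y - x) p ≤ inner ℝ (y - x) q :=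
    ((innerₛₗ ℝ (y - x)).convexOn (convex_convexHull ℝ _)).exists_ge_of_mem_convexHull
      (subset_convexHull ℝ _) hp
  have hinner : inner ℝ (y - x) (x - q) ≤ dist y x * dist x p :=
    calc inner ℝ (y - x) (x - q) ≤ inner ℝ (y - x) (x - p) := by
          rw [inner_sub_right, inner_sub_right]
          gcongr
      _ ≤ dist y x * dist x p := by
          rw [dist_eq_norm, dist_eq_norm]
          exact real_inner_le_norm _ _
  calc infDist y K ^ 2 ≤ dist y q ^ 2 := by
        gcongr
        exacts [infDist_nonneg, infDist_le_dist_of_mem hqK]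
    _ = dist y x ^ 2 + 2 * inner ℝ (y - x) (x - q) + dist x q ^ 2 := by
        rw [dist_eq_norm, dist_eq_norm, dist_eq_norm, ← norm_add_sq_real, sub_add_sub_cancel]
    _ ≤ infDist x K ^ 2 + 2 * dist y x * dist x p + dist y x ^ 2 := by
        rw [hq]
        linarith

lemma infDist_sq_le_add_infDist_convexHull_nearestPoints (hne : (nearestPoints K x).Nonempty)
    (y : E) :
    infDist y K ^ 2 ≤ infDist x K ^ 2 +
      2 * dist y x * infDist x (convexHull ℝ (nearestPoints K x)) + dist y x ^ 2 := by
  have : Nonempty (convexHull ℝ (nearestPoints K x)) := (hne.convexHull (𝕜 := ℝ)).to_subtype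
  rw [infDist_eq_iInf (x := x) (s := convexHull ℝ _), Real.mul_iInf_of_nonneg (by positivity)]
  have hle : infDist y K ^ 2 - infDist x K ^ 2 - dist y x ^ 2 ≤
      ⨅ p : convexHull ℝ (nearestPoints K x), 2 * dist y x * dist x p :=
    le_ciInf fun p ↦ by linarith [infDist_sq_le_of_mem_convexHull_nearestPoints p.2 y]
  linarith

lemma exists_norm_eq_one_forall_lt_inner_of_lt_infDist [CompleteSpace E] (hS : Convex ℝ S)
    (hne : S.Nonempty) (hr : 0 ≤ r) (hy : r < infDist y S) :
    ∃ u : E, ‖u‖ = 1 ∧ ∀ q ∈ S, r < inner ℝ u (y - q) := by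
  obtain ⟨p, hp, hpmin⟩ := exists_norm_eq_iInf_of_complete_convex hne.closure
    isClosed_closure.isComplete hS.closure y
  have hproj := (norm_eq_iInf_iff_real_inner_le_zero hS.closure hp).1 hpmin
  have hrp : r < ‖y - p‖ := by
    rw [← dist_eq_norm]
    exact hy.trans_le (infDist_closure.symm.trans_le (infDist_le_dist_of_mem hp))
  have hpos : 0 < ‖y - p‖ := hr.trans_lt hrp
  refine ⟨‖y - p‖⁻¹ • (y - p), norm_smul_inv_norm (norm_pos_iff.1 hpos), fun q hq ↦ ?_⟩
  have hsplit : inner ℝ (y - p) (y - q) = ‖y - p‖ ^ 2 - inner ℝ (y - p) (q - p) := by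
    rw [← real_inner_self_eq_norm_sq, ← inner_sub_right, sub_sub_sub_cancel_right]
  rw [real_inner_smul_left, hsplit, lt_inv_mul_iff₀ hpos]
  nlinarith [hproj q (subset_closure hq)]

lemma add_mul_lt_dist_add_smul {q u : E} {t : ℝ} (hu : ‖u‖ = 1) (ht : 0 < t) (hC : 0 ≤ C)
    (hC1 : C ≤ 1) (hd : 0 ≤ d) (hdq : d ≤ dist y q) (hinner : C * d < inner ℝ u (y - q)) :
    d + C * t < dist (y + t • u) q := by
  refine lt_of_pow_lt_pow_left₀ 2 dist_nonneg ?_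
  calc (d + C * t) ^ 2 = d ^ 2 + 2 * (t * (C * d)) + C ^ 2 * t ^ 2 := by ring
    _ ≤ dist y q ^ 2 + 2 * (t * (C * d)) + 1 * t ^ 2 := by
        gcongr
        exact pow_le_one₀ hC hC1
    _ < dist y q ^ 2 + 2 * (t * inner ℝ u (y - q)) + 1 * t ^ 2 := by gcongr
    _ = ‖(y - q) + t • u‖ ^ 2 := by
        rw [norm_add_sq_real, real_inner_smul_right, real_inner_comm, norm_smul, hu,
          Real.norm_of_nonneg ht.le, dist_eq_norm, mul_one, one_mul]
    _ = dist (y + t • u) q ^ 2 := by rw [dist_eq_norm, add_sub_right_comm]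

lemma frequently_add_mul_dist_lt_infDist [ProperSpace E] (hL : IsClosed L) (hne : L.Nonempty)
    (hC : 0 ≤ C) (hy : C * infDist y L < infDist y (convexHull ℝ (nearestPoints L y))) :
    ∃ᶠ z in 𝓝 y, infDist y L + C * dist z y < infDist z L := by
  have hC1 : C < 1 := by
    nlinarith [infDist_convexHull_nearestPoints_le (nearestPoints_nonempty hL hne y),
      infDist_nonneg (x := y) (s := L)]
  obtain ⟨u, hu, hinner⟩ := exists_norm_eq_one_forall_lt_inner_of_lt_infDist
    (convex_convexHull ℝ _) (nearestPoints_nonempty hL hne y).convexHull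
    (mul_nonneg hC infDist_nonneg) hy
  have hnear : ∀ᶠ z in 𝓝 y, nearestPoints L z ⊆ {q | C * infDist y L < inner ℝ u (y - q)} :=
    eventually_nearestPoints_subset hL (isOpen_lt (by fun_prop) (by fun_prop))
      fun q hq ↦ hinner q (subset_convexHull ℝ _ hq)
  have hray : Tendsto (fun t : ℝ ↦ y + t • u) (𝓝[>] 0) (𝓝 y) :=
    (Continuous.tendsto' (by fun_prop) 0 y (by simp)).mono_left nhdsWithin_le_nhds
  refine hray.frequently (Eventually.frequently ?_)
  filter_upwards [hray.eventually hnear, self_mem_nhdsWithin] with t hsub (ht : 0 < t)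
  obtain ⟨q, hq⟩ := nearestPoints_nonempty hL hne (y + t • u)
  have hdist : dist (y + t • u) y = t := by
    rw [dist_self_add_left, norm_smul, hu, mul_one, Real.norm_of_nonneg ht.le]
  rw [hdist, ← hq.2]
  exact add_mul_lt_dist_add_smul hu ht hC hC1.le infDist_nonneg
    (infDist_le_dist_of_mem hq.1) (hsub hq)

lemma lt_of_add_two_mul_sqrt_div_le (ha : 0 < a) (hδ : 0 < δ)
    (hC : μ + 2 * √(δ / (a + δ)) ≤ C) : μ < C := by
  have : 0 < √(δ / (a + δ)) := by positivity
  linarith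

lemma four_mul_div_sub_sq_le (ha : 0 < a) (hδ : 0 < δ) (hC : μ + 2 * √(δ / (a + δ)) ≤ C) :
    (4 * δ / (C - μ)) ^ 2 ≤ 4 * δ * (a + δ) := by
  calc (4 * δ / (C - μ)) ^ 2 ≤ (4 * δ / (2 * √(δ / (a + δ)))) ^ 2 := by
        have hCμ : 0 < C - μ := sub_pos.2 (lt_of_add_two_mul_sqrt_div_le ha hδ hC)
        gcongr
        linarith
    _ = 4 * δ * (a + δ) := by
        rw [div_pow, mul_pow 2, Real.sq_sqrt (by positivity)]
        field_simp
        ring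

lemma growth_bound_lt_sq_of_ascent_bound_le {D s : ℝ} (hδ : 0 < δ) (hμ : 0 ≤ μ) (hd : 0 ≤ d)
    (hs : 0 ≤ s) (hCs : (C - μ) * s = 4 * δ) (hs2 : s ^ 2 ≤ 4 * δ * d)
    (hD : d + C * s - 2 * δ ≤ D) :
    d ^ 2 + 2 * s * (μ * d) + s ^ 2 < D ^ 2 :=
  calc d ^ 2 + 2 * s * (μ * d) + s ^ 2 ≤ d ^ 2 + 2 * s * (μ * d) + 4 * δ * d := by gcongr
    _ < d ^ 2 + 2 * s * (μ * d) + 4 * δ * d + (μ * s + 2 * δ) ^ 2 :=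
        lt_add_of_pos_right _ (by positivity)
    _ = (d + μ * s + 2 * δ) ^ 2 := by ring
    _ ≤ D ^ 2 := by
        gcongr
        linarith

lemma exists_dist_eq_and_add_mul_le_infDist [ProperSpace E] (hL : IsClosed L) (hne : L.Nonempty)
    (hC : 0 ≤ C) (hr : 0 ≤ r) (ha : 0 < a) (hax : a ≤ infDist x L) (hxb : infDist x L + r ≤ b)
    (hcrit : ∀ y, infDist y L ∈ Set.Icc a b → ¬ IsCriticalPoint L C y) :
    ∃ y, dist y x = r ∧ infDist x L + C * r ≤ infDist y L := by
  refine exists_dist_eq_and_add_mul_le_of_frequently_lt hC hr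
    (continuous_infDist_pt L).continuousOn fun y hy hxy ↦ ?_
  have hay : a ≤ infDist y L := by linarith [mul_nonneg hC (dist_nonneg (x := y) (y := x))]
  have hyb : infDist y L ≤ b := by
    linarith [infDist_le_infDist_add_dist (s := L) (x := y) (y := x), mem_ball.1 hy]
  have hyL : y ∉ L := fun hmem ↦ by linarith [infDist_zero_of_mem hmem]
  exact frequently_add_mul_dist_lt_infDist hL hne hC
    (not_le.1 fun hle ↦ hcrit y ⟨hay, hyb⟩ ⟨hyL, hle⟩)

theorem stmt8_general [ProperSpace E] (hne : (nearestPoints K x).Nonempty) (hL : IsClosed L)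
    (hδ : 0 < δ) (hKL : hausdorffEDist K L ≤ ENNReal.ofReal δ) (ha : 0 < a) (hμ : 0 ≤ μ)
    (hC : μ + 2 * √(δ / (a + δ)) ≤ C)
    (hcrit : ∀ y, infDist y L ∈ Set.Icc a b → ¬ IsCriticalPoint L C y)
    (hx : infDist x K ∈ Set.Icc (a + δ) (b - 4 * δ / (C - μ) - δ)) :
    ¬ IsCriticalPoint K μ x := by
  rintro ⟨-, hxcrit⟩
  have hLne : L.Nonempty := nonempty_of_hausdorffEDist_ne_top (hne.mono (Set.sep_subset _ _))
    (ne_top_of_le_ne_top ENNReal.ofReal_ne_top hKL)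
  have hL_le := infDist_le_infDist_add_of_hausdorffEDist_le hδ.le hKL
  have hK_le := infDist_le_infDist_add_of_hausdorffEDist_le hδ.le (hausdorffEDist_comm.trans_le hKL)
  have hCμ : 0 < C - μ := sub_pos.2 (lt_of_add_two_mul_sqrt_div_le ha hδ hC)
  have hCs : (C - μ) * (4 * δ / (C - μ)) = 4 * δ := mul_div_cancel₀ _ hCμ.ne'
  have hs2 : (4 * δ / (C - μ)) ^ 2 ≤ 4 * δ * infDist x K :=
    (four_mul_div_sub_sq_le ha hδ hC).trans (by gcongr; exact hx.1)
  have hs : 0 ≤ 4 * δ / (C - μ) := by positivity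
  obtain ⟨y, hyx, hascent⟩ := exists_dist_eq_and_add_mul_le_infDist hL hLne (by linarith) hs ha
    (by linarith [hK_le x, hx.1]) (by linarith [hL_le x, hx.2]) hcrit
  rw [← hyx] at hCs hs2 hs hascent
  refine (infDist_sq_le_add_infDist_convexHull_nearestPoints hne y).not_gt ?_
  calc infDist x K ^ 2 + 2 * dist y x * infDist x (convexHull ℝ (nearestPoints K x)) + dist y x ^ 2
      ≤ infDist x K ^ 2 + 2 * dist y x * (μ * infDist x K) + dist y x ^ 2 := by gcongr
    _ < infDist y K ^ 2 := growth_bound_lt_sq_of_ascent_bound_le hδ hμ infDist_nonneg hs hCs hs2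
        (by linarith [hK_le x, hL_le y])

end InnerProduct

/-- Annular stability corollary (Euclidean case): absence of `C`-critical points of `d_L` in
the annulus `L_[a,b]` implies absence of μ-critical points of `d_K` in the annulus
`K_[a+δ, b − 4δ/(C−μ) − δ]`. -/
theorem stmt8 {E : Type*} [NormedAddCommGroup E] [InnerProductSpace ℝ E]
    [FiniteDimensional ℝ E]
    (K L : Set E) (hKne : K.Nonempty) (hKc : IsCompact K)
    (hLne : L.Nonempty) (hLc : IsCompact L)
    (δ : ℝ) (hδ : 0 < δ) (hH : hausdorffDist K L ≤ δ)
    (a b : ℝ) (ha : 0 < a) (hab : a ≤ b)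
    (μ : ℝ) (hμ : μ ∈ Set.Ico (0 : ℝ) 1)
    (C : ℝ) (hC1 : μ < C) (hC2 : C ≤ 1)
    (hC3 : μ + 2 * Real.sqrt (δ / (a + δ)) ≤ C)
    (hL : ∀ y : E, y ∉ L → infDist y L ∈ Set.Icc a b →
      ¬ (infDist y (convexHull ℝ {q ∈ L | dist y q = infDist y L}) ≤ C * infDist y L)) :
    ∀ x : E, x ∉ K → infDist x K ∈ Set.Icc (a + δ) (b - 4 * δ / (C - μ) - δ) →
      ¬ (infDist x (convexHull ℝ {q ∈ K | dist x q = infDist x K}) ≤ μ * infDist x K) := by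
  intro x hxK hx hcrit
  have hKL : hausdorffEDist K L ≤ ENNReal.ofReal δ :=
    (ENNReal.le_ofReal_iff_toReal_le (hausdorffEDist_ne_top_of_nonempty_of_bounded hKne hLne
      hKc.isBounded hLc.isBounded) hδ.le).2 hH
  exact stmt8_general (nearestPoints_nonempty hKc.isClosed hKne x) hLc.isClosed hδ hKL ha hμ.1
    hC3 (fun y hy hycrit ↦ hL y hycrit.1 hy hycrit.2) hx ⟨hxK, hcrit⟩
end

section
/- For all real numbers a > 0, C ∈ (0,1), and δ > 0 satisfying 9·δ ≤ 2·tanh(a)·C², one has cosh(a + 2δ) > cosh(4δ/C)·cosh(a). -/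
/-!
By the addition formula, `cosh (a + x) = (cosh x + tanh a * sinh x) * cosh a`. For `a, x > 0` the
first factor exceeds `1 + x ^ 2 / 2 + x * tanh a`, so `cosh t * cosh a < cosh (a + x)` as soon as
`cosh t` is at most this quantity. Put `x = 2δ` and `t = 4δ / C`: the assumption says exactly that
`9 / 16 * t ^ 2 ≤ x * tanh a`. If `|t| ≤ x`, then `cosh t ≤ cosh x` suffices. Otherwise
`tanh a < 1` gives `9 / 16 * t ^ 2 ≤ x < |t|`, hence `|t| < 2`, and in that range
`cosh t ≤ 1 + 9 / 16 * t ^ 2 + (9 / 16 * t ^ 2) ^ 2 / 2`, by doubling the Taylor bound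
`cosh s ≤ 1 + 9 / 16 * s ^ 2` for `|s| ≤ 1`.
-/

open Real

theorem abs_cosh_sub_one_add_half_sq_le {x : ℝ} (hx : |x| ≤ 1) :
    |cosh x - (1 + x ^ 2 / 2)| ≤ |x| ^ 4 * (5 / 96) := by
  have cos_bound_mul_I := Complex.cos_bound (x := x * Complex.I) (by simpa using hx)
  rw [Complex.cos_mul_I, mul_pow, Complex.I_sq, norm_mul, Complex.norm_I, mul_one, mul_neg_one,
    neg_div, sub_neg_eq_add, Complex.norm_real, norm_eq_abs] at cos_bound_mul_I
  exact_mod_cast cos_bound_mul_I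

theorem cosh_le_one_add_nine_sixteenths_mul_sq {x : ℝ} (hx : |x| ≤ 1) :
    cosh x ≤ 1 + 9 / 16 * x ^ 2 := by
  have taylor := (abs_le.mp (abs_cosh_sub_one_add_half_sq_le hx)).2
  have pow_four_le_sq : |x| ^ 4 ≤ x ^ 2 :=
    sq_abs x ▸ pow_le_pow_of_le_one (abs_nonneg x) hx (by norm_num)
  linarith [sq_nonneg x]

theorem cosh_eq_one_add_two_mul_sinh_half_sq (x : ℝ) : cosh x = 1 + 2 * sinh (x / 2) ^ 2 := by
  have double_angle := cosh_two_mul (x / 2)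
  rw [mul_div_cancel₀ x two_ne_zero, cosh_sq] at double_angle
  linarith

theorem one_add_half_sq_le_cosh (x : ℝ) : 1 + x ^ 2 / 2 ≤ cosh x := by
  have sq_half_le : (x / 2) ^ 2 ≤ sinh (x / 2) ^ 2 := by
    rw [sq_le_sq, abs_sinh]
    exact self_le_sinh_iff.mpr (abs_nonneg _)
  rw [cosh_eq_one_add_two_mul_sinh_half_sq]
  linarith

theorem cosh_le_of_abs_le_two {x : ℝ} (hx : |x| ≤ 2) :
    cosh x ≤ 1 + 9 / 16 * x ^ 2 + (9 / 16 * x ^ 2) ^ 2 / 8 := by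
  have abs_half_le : |x / 2| ≤ 1 := by
    rw [abs_div, abs_two]
    linarith
  calc
    cosh x = 2 * cosh (x / 2) ^ 2 - 1 := by
      rw [cosh_eq_one_add_two_mul_sinh_half_sq, sinh_sq]
      ring
    _ ≤ 2 * (1 + 9 / 16 * (x / 2) ^ 2) ^ 2 - 1 := by
      gcongr
      exact cosh_le_one_add_nine_sixteenths_mul_sq abs_half_le
    _ = 1 + 9 / 16 * x ^ 2 + (9 / 16 * x ^ 2) ^ 2 / 8 := by ring

theorem cosh_add_eq_mul_cosh (a x : ℝ) :
    cosh (a + x) = (cosh x + tanh a * sinh x) * cosh a := by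
  rw [cosh_add, tanh_eq_sinh_div_cosh]
  field_simp [(cosh_pos a).ne']

theorem tanh_pos_iff {a : ℝ} : 0 < tanh a ↔ 0 < a := by
  rw [tanh_eq_sinh_div_cosh, div_pos_iff_of_pos_right (cosh_pos a), sinh_pos_iff]

theorem cosh_mul_cosh_lt_cosh_add {a t x : ℝ} (ha : 0 < a) (hx : 0 < x)
    (h : 9 / 16 * t ^ 2 ≤ x * tanh a) : cosh t * cosh a < cosh (a + x) := by
  have tanh_a_pos : 0 < tanh a := tanh_pos_iff.mpr ha
  have tanh_mul_lt : tanh a * x < tanh a * sinh x := by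
    gcongr
    exact self_lt_sinh_iff.mpr hx
  rw [cosh_add_eq_mul_cosh]
  gcongr
  rcases le_or_gt |t| x with t_le | x_lt
  · have cosh_t_le : cosh t ≤ cosh x := cosh_le_cosh.mpr (t_le.trans (le_abs_self x))
    linarith [mul_pos tanh_a_pos hx]
  · have sq_le : 9 / 16 * t ^ 2 ≤ x :=
      h.trans (mul_le_of_le_one_right hx.le (tanh_lt_one a).le)
    have abs_t_le : |t| ≤ 2 := by
      rw [← sq_abs] at sq_le
      nlinarith
    have sq_sq_le : (9 / 16 * t ^ 2) ^ 2 ≤ x ^ 2 := by gcongr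
    calc
      cosh t ≤ 1 + 9 / 16 * t ^ 2 + (9 / 16 * t ^ 2) ^ 2 / 8 := cosh_le_of_abs_le_two abs_t_le
      _ ≤ 1 + x ^ 2 / 2 + tanh a * x := by linarith [sq_nonneg x]
      _ < cosh x + tanh a * sinh x := add_lt_add_of_le_of_lt (one_add_half_sq_le_cosh x) tanh_mul_lt

theorem stmt9_general (a C δ : ℝ) (hδ : 0 < δ) (h : 9 * δ ≤ 2 * tanh a * C ^ 2) :
    cosh (4 * δ / C) * cosh a < cosh (a + 2 * δ) := by
  have rhs_pos : 0 < 2 * tanh a * C ^ 2 := by linarith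
  have C_sq_pos : 0 < C ^ 2 := (sq_nonneg C).lt_of_ne' (right_ne_zero_of_mul rhs_pos.ne')
  have tanh_a_pos : 0 < tanh a := by
    linarith [pos_of_mul_pos_left rhs_pos C_sq_pos.le]
  refine cosh_mul_cosh_lt_cosh_add (tanh_pos_iff.mp tanh_a_pos) (by positivity) ?_
  calc
    9 / 16 * (4 * δ / C) ^ 2 = δ * (9 * δ / C ^ 2) := by ring
    _ ≤ δ * (2 * tanh a) := by
      gcongr
      exact (div_le_iff₀ C_sq_pos).mpr h
    _ = 2 * δ * tanh a := by ring

/-- The analytic core of the stability proposition in curvature ≥ −1: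
if `9δ ≤ 2 tanh(a) C²` then `cosh(a + 2δ) > cosh(4δ/C) cosh(a)`. -/
theorem stmt9 (a C δ : ℝ) (ha : 0 < a) (hC : C ∈ Set.Ioo (0 : ℝ) 1) (hδ : 0 < δ)
    (h : 9 * δ ≤ 2 * Real.tanh a * C ^ 2) :
    Real.cosh (4 * δ / C) * Real.cosh a < Real.cosh (a + 2 * δ) :=
  stmt9_general a C δ hδ h
end

section
/- Let E be a real inner product space, let 0 < ρ < r, set c = (r+ρ)/2, and let S ⊆ E be a nonempty set with ρ ≤ ‖z‖ ≤ r for all z ∈ S. Let T = (fun z => (c/‖z‖) • z) '' S be the radial projection of S onto the sphere of radius c. Then hausdorffDist S T ≤ (r − ρ)/2. -/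
open Metric

theorem hausdorffDist_image_le_of_dist_le {X : Type*} [PseudoMetricSpace X] {f : X → X}
    {s : Set X} {δ : ℝ} (hs : s.Nonempty) (hf : ∀ x ∈ s, dist x (f x) ≤ δ) :
    hausdorffDist s (f '' s) ≤ δ := by
  obtain ⟨x₀, hx₀⟩ := hs
  refine hausdorffDist_le_of_mem_dist (dist_nonneg.trans (hf x₀ hx₀)) ?_ ?_
  · exact fun x hx => ⟨f x, Set.mem_image_of_mem f hx, hf x hx⟩
  · rintro _ ⟨x, hx, rfl⟩
    exact ⟨x, hx, dist_comm x (f x) ▸ hf x hx⟩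

theorem dist_div_norm_smul_self {E : Type*} [SeminormedAddCommGroup E] [NormedSpace ℝ E]
    (c : ℝ) {z : E} (hz : ‖z‖ ≠ 0) : dist z ((c / ‖z‖) • z) = |‖z‖ - c| :=
  calc dist z ((c / ‖z‖) • z)
    _ = ‖(1 - c / ‖z‖) • z‖ := by rw [dist_eq_norm, sub_smul, one_smul]
    _ = |(1 - c / ‖z‖) * ‖z‖| := by rw [norm_smul, Real.norm_eq_abs, abs_mul, abs_norm]
    _ = |‖z‖ - c| := by rw [sub_mul, one_mul, div_mul_cancel₀ c hz]

theorem stmt15_general {E : Type*} [SeminormedAddCommGroup E] [NormedSpace ℝ E]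
    {ρ r : ℝ} (hρ : 0 < ρ) {S : Set E} (hSne : S.Nonempty)
    (hS : ∀ z ∈ S, ρ ≤ ‖z‖ ∧ ‖z‖ ≤ r) :
    hausdorffDist S ((fun z : E => ((r + ρ) / 2 / ‖z‖) • z) '' S) ≤ (r - ρ) / 2 := by
  refine hausdorffDist_image_le_of_dist_le hSne fun z hz => ?_
  obtain ⟨hρz, hzr⟩ := hS z hz
  rw [dist_div_norm_smul_self _ (hρ.trans_le hρz).ne', abs_le]
  constructor <;> linarith

/-- Radial-projection estimate: a set contained in the annulus `{z : ρ ≤ ‖z‖ ≤ r}` is within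
Hausdorff distance `(r − ρ)/2` of its radial projection onto the sphere of radius `(r+ρ)/2`. -/
theorem stmt15 {E : Type*} [NormedAddCommGroup E] [InnerProductSpace ℝ E]
    (ρ r : ℝ) (hρ : 0 < ρ) (hρr : ρ < r)
    (S : Set E) (hSne : S.Nonempty) (hS : ∀ z ∈ S, ρ ≤ ‖z‖ ∧ ‖z‖ ≤ r) :
    hausdorffDist S ((fun z : E => ((r + ρ) / 2 / ‖z‖) • z) '' S) ≤ (r - ρ) / 2 :=
  stmt15_general hρ hSne hS
end

section
/- Let E be a real inner product space, let S ⊆ E be a set with 0 ∉ S, and let c > 0. If 0 ∈ convexHull ℝ S, then 0 ∈ convexHull ℝ ((fun z => (c/‖z‖) • z) '' S). -/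
section OrderedField

variable {R E : Type*} [Field R] [LinearOrder R] [IsStrictOrderedRing R]
  [AddCommGroup E] [Module R E]

theorem zero_mem_convexHull_of_sum_smul_eq_zero {ι : Type*} {s : Set E} (t : Finset ι)
    {w : ι → R} {z : ι → E} (hw₀ : ∀ i ∈ t, 0 ≤ w i) (hw : 0 < ∑ i ∈ t, w i)
    (hz : ∀ i ∈ t, z i ∈ s) (hwz : ∑ i ∈ t, w i • z i = 0) :
    (0 : E) ∈ convexHull R s := by
  have hmem : t.centerMass w z ∈ convexHull R s := t.centerMass_mem_convexHull hw₀ hw hz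
  rwa [Finset.centerMass, hwz, smul_zero] at hmem

theorem zero_mem_convexHull_image_smul {s : Set E} {r : E → R} (hr : ∀ z ∈ s, 0 < r z)
    (h : (0 : E) ∈ convexHull R s) :
    (0 : E) ∈ convexHull R ((fun z ↦ r z • z) '' s) := by
  obtain ⟨ι, _, w, z, hw₀, hw₁, hz, hwz⟩ := mem_convexHull_iff_exists_fintype.1 h
  have hrz (i : ι) : 0 < r (z i) := hr (z i) (hz i)
  have hweight_nonneg (i : ι) : 0 ≤ w i / r (z i) := div_nonneg (hw₀ i) (hrz i).le
  have hweight_sum_pos : 0 < ∑ i, w i / r (z i) := by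
    obtain ⟨i, hi, hwi⟩ : ∃ i ∈ Finset.univ, 0 < w i :=
      (Finset.sum_pos_iff_of_nonneg fun i _ ↦ hw₀ i).1 (hw₁ ▸ zero_lt_one)
    exact Finset.sum_pos' (fun i _ ↦ hweight_nonneg i) ⟨i, hi, div_pos hwi (hrz i)⟩
  refine zero_mem_convexHull_of_sum_smul_eq_zero Finset.univ (w := fun i ↦ w i / r (z i))
    (z := fun i ↦ r (z i) • z i) (fun i _ ↦ hweight_nonneg i) hweight_sum_pos
    (fun i _ ↦ Set.mem_image_of_mem _ (hz i)) ?_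
  calc ∑ i, (w i / r (z i)) • r (z i) • z i
      = ∑ i, w i • z i :=
        Finset.sum_congr rfl fun i _ ↦ by rw [smul_smul, div_mul_cancel₀ _ (hrz i).ne']
    _ = 0 := hwz

end OrderedField

theorem stmt16_general {E : Type*} [NormedAddCommGroup E] [NormedSpace ℝ E]
    (S : Set E) (hS : (0 : E) ∉ S) (c : ℝ) (hc : 0 < c)
    (h : (0 : E) ∈ convexHull ℝ S) :
    (0 : E) ∈ convexHull ℝ ((fun z : E => (c / ‖z‖) • z) '' S) :=
  zero_mem_convexHull_image_smul
    (fun _ hz ↦ div_pos hc (norm_pos_iff.2 (ne_of_mem_of_not_mem hz hS))) h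

/-- If `0` lies in the convex hull of a set `S` not containing `0`, then `0` also lies in the
convex hull of the radial projection of `S` onto the sphere of radius `c`. -/
theorem stmt16 {E : Type*} [NormedAddCommGroup E] [InnerProductSpace ℝ E]
    (S : Set E) (hS : (0 : E) ∉ S) (c : ℝ) (hc : 0 < c)
    (h : (0 : E) ∈ convexHull ℝ S) :
    (0 : E) ∈ convexHull ℝ ((fun z : E => (c / ‖z‖) • z) '' S) :=
  stmt16_general S hS c hc h
end

section
/- Let E be a finite-dimensional real inner product space, K ⊆ E a nonempty compact set, r > 0, and x ∉ K with K ∩ Metric.closedBall x r nonempty. If (w, β) and (w', β') are both minimal acute r-spanning cones for K from x (each is an r-spanning cone for K from x with β < π/2 and β' < π/2, and each of β, β' is ≤ the angle of every r-spanning cone for K from x), then β = β' and w = w'. -/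
open Real Metric InnerProductGeometry

/-!
Two minimal cones have the same angle `β`. If their axes `w`, `w'` differ, every direction `v` in
both cones satisfies `⟪v, w + w'⟫ ≥ 2 cos β` while `‖w + w'‖ < 2` by strict convexity, so the cone
around the bisector `w + w'` of angle `arccos (2 cos β / ‖w + w'‖) < β` still contains all these
directions, contradicting minimality.
-/

section Angle

variable {E : Type*} [NormedAddCommGroup E] [InnerProductSpace ℝ E] {v w w' : E} {β : ℝ}

theorem cos_mul_norm_mul_norm_le_inner_of_angle_le (hβ : β ≤ π) (h : angle v w ≤ β) :
    cos β * (‖v‖ * ‖w‖) ≤ inner ℝ v w := by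
  rw [← cos_angle_mul_norm_mul_norm]
  gcongr
  exact cos_le_cos_of_nonneg_of_le_pi (angle_nonneg v w) hβ h

theorem cos_mul_norm_add_norm_le_inner_add (hβ : β ≤ π) (h : angle v w ≤ β)
    (h' : angle v w' ≤ β) :
    ‖v‖ * (cos β * (‖w‖ + ‖w'‖)) ≤ inner ℝ v (w + w') := by
  rw [inner_add_right]
  linarith [cos_mul_norm_mul_norm_le_inner_of_angle_le hβ h,
    cos_mul_norm_mul_norm_le_inner_of_angle_le hβ h']

theorem cos_mul_norm_add_norm_le_norm_add (hβ : β ≤ π) (hv : v ≠ 0) (h : angle v w ≤ β)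
    (h' : angle v w' ≤ β) :
    cos β * (‖w‖ + ‖w'‖) ≤ ‖w + w'‖ :=
  le_of_mul_le_mul_left
    ((cos_mul_norm_add_norm_le_inner_add hβ h h').trans (real_inner_le_norm v (w + w')))
    (norm_pos_iff.2 hv)

theorem angle_add_le_arccos (hβ : β ≤ π) (hv : v ≠ 0) (h : angle v w ≤ β)
    (h' : angle v w' ≤ β) :
    angle v (w + w') ≤ arccos (cos β * (‖w‖ + ‖w'‖) / ‖w + w'‖) := by
  apply arccos_le_arccos
  rw [← mul_div_mul_left _ _ (norm_ne_zero_iff.2 hv)]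
  gcongr
  exact cos_mul_norm_add_norm_le_inner_add hβ h h'

theorem arccos_cos_mul_norm_add_norm_div_lt (hww' : ¬SameRay ℝ w w') (hβ₀ : 0 ≤ β)
    (hβ : β < π / 2) (hle : cos β * (‖w‖ + ‖w'‖) ≤ ‖w + w'‖) :
    arccos (cos β * (‖w‖ + ‖w'‖) / ‖w + w'‖) < β := by
  have hcos : 0 < cos β := cos_pos_of_mem_Ioo ⟨by linarith, hβ⟩
  have hlt : ‖w + w'‖ < ‖w‖ + ‖w'‖ := norm_add_lt_of_not_sameRay hww'
  have hsum : 0 < ‖w‖ + ‖w'‖ := (norm_nonneg _).trans_lt hlt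
  have hadd : 0 < ‖w + w'‖ := (mul_pos hcos hsum).trans_le hle
  calc
    arccos (cos β * (‖w‖ + ‖w'‖) / ‖w + w'‖) < arccos (cos β) :=
      arccos_lt_arccos (neg_one_le_cos β)
        ((lt_div_iff₀ hadd).2 (mul_lt_mul_of_pos_left hlt hcos)) ((div_le_one hadd).2 hle)
    _ = β := arccos_cos hβ₀ (by linarith)

theorem exists_lt_forall_angle_add_le (hww' : ¬SameRay ℝ w w') (hβ : β < π / 2) :
    ∃ γ < β, ∀ v, angle v w ≤ β → angle v w' ≤ β → angle v (w + w') ≤ γ := by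
  have hβπ : β ≤ π := by linarith [pi_pos]
  have ne_zero {v : E} (hv : angle v w ≤ β) : v ≠ 0 := by
    rintro rfl
    rw [angle_zero_left] at hv
    exact hβ.not_ge hv
  by_cases hcommon : ∃ v, angle v w ≤ β ∧ angle v w' ≤ β
  · obtain ⟨v₀, h₀, h₀'⟩ := hcommon
    have hle := cos_mul_norm_add_norm_le_norm_add hβπ (ne_zero h₀) h₀ h₀'
    exact ⟨_, arccos_cos_mul_norm_add_norm_div_lt hww' ((angle_nonneg v₀ w).trans h₀) hβ hle,
      fun v h h' => angle_add_le_arccos hβπ (ne_zero h) h h'⟩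
  · exact ⟨β - 1, sub_one_lt β, fun v h h' => (hcommon ⟨v, h, h'⟩).elim⟩

end Angle

section SpanningCone

variable {E : Type*} [NormedAddCommGroup E] [InnerProductSpace ℝ E]
  {A : Set E} {x y w w' : E} {r β β' : ℝ}

/-- The part within distance `r` of `x` of the cone with apex `x`, axis `w` and half-angle `β`: the
set that a spanning cone requires to contain `A ∩ closedBall x r`. -/
def truncatedCone (x w : E) (r β : ℝ) : Set E :=
  {y | ∃ t ∈ Set.Icc (0 : ℝ) r, ∃ v : E, ‖v‖ = 1 ∧ angle v w ≤ β ∧ y = x + t • v}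

/-- `(w, β)` is an `r`-spanning cone for `A` from `x`. The requirements that `A ∩ closedBall x r` be
nonempty and that `β ∈ [0, π]` are not part of the structure: the former does not involve the
cone, and it forces `0 ≤ β`, while angles beyond `π` give the same cone as `π`. -/
structure IsSpanningCone (A : Set E) (x : E) (r : ℝ) (w : E) (β : ℝ) : Prop where
  norm_axis : ‖w‖ = 1
  inter_subset : A ∩ closedBall x r ⊆ truncatedCone x w r β

/-- `(w, β)` is an `r`-spanning cone for `A` from `x` of least possible angle. -/
structure IsMinimalSpanningCone (A : Set E) (x : E) (r : ℝ) (w : E) (β : ℝ) : Prop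
    extends IsSpanningCone A x r w β where
  angle_le : ∀ ⦃w' : E⦄ ⦃β' : ℝ⦄, IsSpanningCone A x r w' β' → β ≤ β'

theorem apex_mem_truncatedCone (hr : 0 ≤ r) (hw : ‖w‖ = 1) (hβ : 0 ≤ β) :
    x ∈ truncatedCone x w r β := by
  have hw₀ : w ≠ 0 := norm_ne_zero_iff.1 (hw ▸ one_ne_zero)
  exact ⟨0, ⟨le_rfl, hr⟩, w, hw, (angle_self hw₀).trans_le hβ, by simp⟩

theorem mem_truncatedCone_iff_of_ne (hy : y ≠ x) :
    y ∈ truncatedCone x w r β ↔ y ∈ closedBall x r ∧ angle (y - x) w ≤ β := by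
  rw [mem_closedBall_iff_norm]
  constructor
  · rintro ⟨t, ⟨ht₀, htr⟩, v, hv, hangle, rfl⟩
    have ht : 0 < t := ht₀.lt_of_ne (by rintro rfl; simp at hy)
    rw [add_sub_cancel_left, norm_smul, hv, mul_one, norm_of_nonneg ht₀,
      angle_smul_left_of_pos _ _ ht]
    exact ⟨htr, hangle⟩
  · rintro ⟨hyr, hangle⟩
    have hpos : 0 < ‖y - x‖ := norm_pos_iff.2 (sub_ne_zero.2 hy)
    refine ⟨‖y - x‖, ⟨hpos.le, hyr⟩, ‖y - x‖⁻¹ • (y - x), ?_, ?_, ?_⟩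
    · exact norm_smul_inv_norm (𝕜 := ℝ) (sub_ne_zero.2 hy)
    · rwa [angle_smul_left_of_pos _ _ (inv_pos.2 hpos)]
    · rw [smul_inv_smul₀ hpos.ne', add_sub_cancel]

theorem IsSpanningCone.angle_sub_le (h : IsSpanningCone A x r w β)
    (hy : y ∈ (A ∩ closedBall x r) \ {x}) : angle (y - x) w ≤ β :=
  ((mem_truncatedCone_iff_of_ne hy.2).1 (h.inter_subset hy.1)).2

theorem isSpanningCone_normalize (hA : ((A ∩ closedBall x r) \ {x}).Nonempty) (hw : w ≠ 0)
    (h : ∀ y ∈ (A ∩ closedBall x r) \ {x}, angle (y - x) w ≤ β) :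
    IsSpanningCone A x r (‖w‖⁻¹ • w) β := by
  have hnorm : ‖‖w‖⁻¹ • w‖ = 1 := norm_smul_inv_norm (𝕜 := ℝ) hw
  refine ⟨hnorm, fun y hy => ?_⟩
  obtain rfl | hyx := eq_or_ne y x
  · obtain ⟨z, hz⟩ := hA
    exact apex_mem_truncatedCone (nonempty_closedBall.1 ⟨y, hy.2⟩) hnorm
      ((angle_nonneg _ _).trans (h z hz))
  · rw [mem_truncatedCone_iff_of_ne hyx,
      angle_smul_right_of_pos _ _ (inv_pos.2 (norm_pos_iff.2 hw))]
    exact ⟨hy.2, h y ⟨hy, hyx⟩⟩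

theorem IsMinimalSpanningCone.angle_eq (h : IsMinimalSpanningCone A x r w β)
    (h' : IsMinimalSpanningCone A x r w' β') : β = β' :=
  le_antisymm (h.angle_le h'.toIsSpanningCone) (h'.angle_le h.toIsSpanningCone)

theorem IsMinimalSpanningCone.axis_eq (hA : ((A ∩ closedBall x r) \ {x}).Nonempty)
    (hβ : β < π / 2) (h : IsMinimalSpanningCone A x r w β)
    (h' : IsSpanningCone A x r w' β) : w = w' := by
  by_contra hne
  have hray : ¬SameRay ℝ w w' :=
    mt (sameRay_iff_of_norm_eq (h.norm_axis.trans h'.norm_axis.symm)).1 hne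
  obtain ⟨γ, hγβ, hγ⟩ := exists_lt_forall_angle_add_le hray hβ
  have hbisector : ∀ y ∈ (A ∩ closedBall x r) \ {x}, angle (y - x) (w + w') ≤ γ :=
    fun y hy => hγ _ (h.angle_sub_le hy) (h'.angle_sub_le hy)
  have hadd : w + w' ≠ 0 := by
    intro hzero
    obtain ⟨y, hy⟩ := hA
    have hright := hbisector y hy
    rw [hzero, angle_zero_right] at hright
    linarith
  exact hγβ.not_ge (h.angle_le (isSpanningCone_normalize hA hadd hbisector))

theorem stmt19_general (hA : ((A ∩ closedBall x r) \ {x}).Nonempty) (hβ : β < π / 2)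
    (h : IsMinimalSpanningCone A x r w β) (h' : IsMinimalSpanningCone A x r w' β') :
    β = β' ∧ w = w' := by
  obtain rfl := h.angle_eq h'
  exact ⟨rfl, h.axis_eq hA hβ h'.toIsSpanningCone⟩

end SpanningCone

/-- Uniqueness of the minimal acute `r`-spanning cone: if `(w, β)` and `(w', β')` are both
minimal acute `r`-spanning cones for `K` from `x`, then `β = β'` and `w = w'`. -/
theorem stmt19 {E : Type*} [NormedAddCommGroup E] [InnerProductSpace ℝ E]
    [FiniteDimensional ℝ E]
    (K : Set E) (hKne : K.Nonempty) (hKc : IsCompact K)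
    (r : ℝ) (hr : 0 < r) (x : E) (hx : x ∉ K)
    (hKx : (K ∩ closedBall x r).Nonempty)
    (w w' : E) (β β' : ℝ) (hw : ‖w‖ = 1) (hw' : ‖w'‖ = 1)
    (hβ : β < π / 2) (hβ' : β' < π / 2)
    (hspan : K ∩ closedBall x r ⊆
      {y : E | ∃ t ∈ Set.Icc (0 : ℝ) r, ∃ v : E, ‖v‖ = 1 ∧
        InnerProductGeometry.angle v w ≤ β ∧ y = x + t • v})
    (hspan' : K ∩ closedBall x r ⊆
      {y : E | ∃ t ∈ Set.Icc (0 : ℝ) r, ∃ v : E, ‖v‖ = 1 ∧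
        InnerProductGeometry.angle v w' ≤ β' ∧ y = x + t • v})
    (hmin : ∀ w'' : E, ∀ β'' : ℝ, ‖w''‖ = 1 →
      K ∩ closedBall x r ⊆
        {y : E | ∃ t ∈ Set.Icc (0 : ℝ) r, ∃ v : E, ‖v‖ = 1 ∧
          InnerProductGeometry.angle v w'' ≤ β'' ∧ y = x + t • v} →
      β ≤ β'')
    (hmin' : ∀ w'' : E, ∀ β'' : ℝ, ‖w''‖ = 1 →
      K ∩ closedBall x r ⊆
        {y : E | ∃ t ∈ Set.Icc (0 : ℝ) r, ∃ v : E, ‖v‖ = 1 ∧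
          InnerProductGeometry.angle v w'' ≤ β'' ∧ y = x + t • v} →
      β' ≤ β'') :
    β = β' ∧ w = w' :=
  stmt19_general (hKx.mono fun _ hy => ⟨hy, ne_of_mem_of_not_mem hy.1 hx⟩) hβ
    ⟨⟨hw, hspan⟩, fun _ _ h => hmin _ _ h.norm_axis h.inter_subset⟩
    ⟨⟨hw', hspan'⟩, fun _ _ h => hmin' _ _ h.norm_axis h.inter_subset⟩
end
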